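/- arXiv:0709.4518 — 2 statements merged into one kernel-verified Lean document; each statement's English description precedes it below -/
import Mathlib

section
/- Fix d > 2, n > d+1, m = n−d−1, and let U be a shifted order ideal of monomials of degree at most (d+1)/2 on [m]. Set Û = U ∩ K[x_2,…,x_m] (with Û = {1} if m = 1) and Ũ = {u : x_1 u ∈ U}; let S_d(Û) be the boundary of the complex B_d(Û) generated by {F_d(u) : u ∈ Û}, and let S̃_{d−2}(Ũ) be the boundary of the complex B̃_{d−2}(Ũ) generated by {F_d(x_1 u) ∖ {1,2} : u ∈ Ũ}. Then Shift_{12}(S_d(U)) = S_d(Û) ∪ { {1} ∪ F : F ∈ {2} * S̃_{d−2}(Ũ) }. In particular, S_d(U) satisfies the Link condition with respect to {1,2}, C_{S_d(U)}({1,2}) = S_d(Û), and lk_{S_d(U)}({1,2}) = S̃_{d−2}(Ũ). -/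
/-! Combinatorics of simplicial complexes on subsets of ℕ (vertex set `[n] = Finset.Icc 1 n`). -/

/-- `Γ` is a simplicial complex on the vertex set `V`. -/
def SimplicialComplexOn (V : Finset ℕ) (Γ : Set (Finset ℕ)) : Prop :=
  (∀ F ∈ Γ, F ⊆ V) ∧ (∀ v ∈ V, ({v} : Finset ℕ) ∈ Γ) ∧
    (∀ F ∈ Γ, ∀ G, G ⊆ F → G ∈ Γ)

/-- The dimension of a simplicial complex, as an integer (`dim Γ = max {|F| - 1 : F ∈ Γ}`). -/
noncomputable def sdim (Γ : Set (Finset ℕ)) : ℤ :=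
  sSup ((fun F : Finset ℕ => (F.card : ℤ) - 1) '' Γ)

/-- A facet of `Γ` is a maximal face. -/
def IsFacet (Γ : Set (Finset ℕ)) (F : Finset ℕ) : Prop :=
  F ∈ Γ ∧ ∀ G ∈ Γ, F ⊆ G → F = G

/-- A complex is pure if all of its facets have the same cardinality. -/
def PureComplex (Γ : Set (Finset ℕ)) : Prop :=
  ∀ F G, IsFacet Γ F → IsFacet Γ G → F.card = G.card

/-- `fvec Γ k` is the number of faces of `Γ` of cardinality `k`, i.e. `f_{k-1}(Γ)`. -/
noncomputable def fvec (Γ : Set (Finset ℕ)) (k : ℕ) : ℕ :=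
  {F ∈ Γ | F.card = k}.ncard

/-- The `h`-vector of a `(d-1)`-dimensional complex:
`h_i = ∑_{j=0}^i (-1)^{i-j} binom(d-j, d-i) f_{j-1}`. -/
noncomputable def hvec (d : ℕ) (Γ : Set (Finset ℕ)) (i : ℕ) : ℤ :=
  ∑ j ∈ Finset.range (i + 1),
    (-1 : ℤ) ^ (i - j) * (Nat.choose (d - j) (d - i) : ℤ) * (fvec Γ j : ℤ)

/-- The link of `Γ` with respect to a face `F`. -/
def linkOf (Γ : Set (Finset ℕ)) (F : Finset ℕ) : Set (Finset ℕ) :=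
  {G | Disjoint G F ∧ G ∪ F ∈ Γ}

/-- The contraction of `Γ` with respect to `{i,j}`, identifying vertex `i` with `j`. -/
def contraction (Γ : Set (Finset ℕ)) (i j : ℕ) : Set (Finset ℕ) :=
  {F | F ∈ Γ ∧ i ∉ F} ∪ {G | ∃ F ∈ Γ, i ∈ F ∧ G = F.erase i ∪ {j}}

/-- The Link condition: `lk_Γ({i}) ∩ lk_Γ({j}) = lk_Γ({i,j})`. -/
def LinkCondition (Γ : Set (Finset ℕ)) (i j : ℕ) : Prop :=
  linkOf Γ {i} ∩ linkOf Γ {j} = linkOf Γ {i, j}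

open Classical in
/-- The shift operator `C_{ij}` on faces. -/
noncomputable def shiftMap (Γ : Set (Finset ℕ)) (i j : ℕ) (F : Finset ℕ) : Finset ℕ :=
  if i ∈ F ∧ j ∉ F ∧ F.erase i ∪ {j} ∉ Γ then F.erase i ∪ {j} else F

/-- `Shift_{ij}(Γ) = {C_{ij}(F) : F ∈ Γ}`. -/
noncomputable def shiftComplex (Γ : Set (Finset ℕ)) (i j : ℕ) : Set (Finset ℕ) :=
  (shiftMap Γ i j) '' Γ

/-- The join `W * Σ = {F ∪ G : F ⊆ W, G ∈ Σ}` of a vertex set with a complex. -/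
def joinW (W : Finset ℕ) (C : Set (Finset ℕ)) : Set (Finset ℕ) :=
  {H | ∃ F ⊆ W, ∃ G ∈ C, H = F ∪ G}

/-- Strong edge decomposability: boundaries of simplices and `{∅}` are strongly edge
decomposable, and recursively, a pure complex satisfying the Link condition w.r.t. an edge
`{i,j}` whose contraction and link are strongly edge decomposable is
strongly edge decomposable. -/
inductive StronglyEdgeDecomposable : Set (Finset ℕ) → Prop
  | trivialComplex : StronglyEdgeDecomposable {(∅ : Finset ℕ)}
  | simplexBoundary (V : Finset ℕ) (hV : V.Nonempty) :
      StronglyEdgeDecomposable {F | F ⊆ V ∧ F ≠ V}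
  | contract (Γ : Set (Finset ℕ)) (i j : ℕ) (hij : i < j)
      (hpure : PureComplex Γ) (hedge : ({i, j} : Finset ℕ) ∈ Γ)
      (hlc : LinkCondition Γ i j)
      (hcon : StronglyEdgeDecomposable (contraction Γ i j))
      (hlk : StronglyEdgeDecomposable (linkOf Γ {i, j})) :
      StronglyEdgeDecomposable Γ

/-- A shifted complex: `F ∈ Γ`, `i ∈ F`, `i < j`, `j ∈ V` imply `(F \ {i}) ∪ {j} ∈ Γ`. -/
def ShiftedComplex (V : Finset ℕ) (Γ : Set (Finset ℕ)) : Prop :=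
  ∀ F ∈ Γ, ∀ i ∈ F, ∀ j, i < j → j ∈ V → insert j (F.erase i) ∈ Γ

/-- A `d`-subset `F ⊆ [n]` is admissible if `n - k ∉ F` implies `[n-d+k, n-k-1] ⊆ F`. -/
def Admissible (n d : ℕ) (F : Finset ℕ) : Prop :=
  F ⊆ Finset.Icc 1 n ∧ F.card = d ∧
    ∀ k < n, (n - k) ∉ F → Finset.Icc (n - d + k) (n - k - 1) ⊆ F

/-- `Δ(n,d)`, the complex generated by all admissible `d`-subsets of `[n]`; by a theorem of
Kalai this is the symmetric algebraic shifted complex `Δˢ(C(n,d))` of the boundary complex of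
the cyclic `d`-polytope with `n` vertices. -/
def DeltaC (n d : ℕ) : Set (Finset ℕ) :=
  if d = 0 then {(∅ : Finset ℕ)} else {G | ∃ F, Admissible n d F ∧ G ⊆ F}

/-- The increasing enumeration of `V`, as a map `{1, …, |V|} → V ⊆ ℕ` (identity elsewhere). -/
noncomputable def vlabel (V : Finset ℕ) (i : ℕ) : ℕ :=
  if h : i - 1 < V.card then (((V.orderIsoOfFin rfl) ⟨i - 1, h⟩ : V) : ℕ) else i

/-- `Δ(V,d)`: the complex `Δ(|V|,d)` relabeled order-isomorphically onto the vertex set `V`. -/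
noncomputable def DeltaV (V : Finset ℕ) (d : ℕ) : Set (Finset ℕ) :=
  (fun G : Finset ℕ => G.image (vlabel V)) '' DeltaC V.card d
/-! Squeezed balls and spheres (Kalai). Monomials on `[m]` are represented as multisets. -/

/-- `U` is a shifted order ideal of monomials on `[m]`: it contains `1` and all variables
`x_1,…,x_m`, is closed under divisibility, and `u·x_i ∈ U`, `i < j ≤ m` imply `u·x_j ∈ U`.
(A monomial is encoded as the multiset of its variable indices.) -/
def IsShiftedOrderIdeal (m : ℕ) (U : Set (Multiset ℕ)) : Prop :=
  (∀ u ∈ U, ∀ i ∈ u, i ∈ Finset.Icc 1 m) ∧ (0 : Multiset ℕ) ∈ U ∧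
    (∀ i ∈ Finset.Icc 1 m, ({i} : Multiset ℕ) ∈ U) ∧
    (∀ u ∈ U, ∀ v, v ≤ u → v ∈ U) ∧
    (∀ u : Multiset ℕ, ∀ i j : ℕ, i < j → j ≤ m → (i ::ₘ u) ∈ U → (j ::ₘ u) ∈ U)

/-- For a monomial `u = x_{i_1}⋯x_{i_k}` (`i_1 ≤ … ≤ i_k`), the `(d+1)`-set
`F_d(u) = {i_1, i_1+1} ∪ {i_2+2, i_2+3} ∪ ⋯ ∪ {i_k+2(k-1), i_k+2k-1} ∪ [n+2k-d, n]`. -/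
noncomputable def Fd (n d : ℕ) (u : Multiset ℕ) : Finset ℕ :=
  (Finset.range (Multiset.card u)).biUnion
      (fun j => {(u.sort (· ≤ ·)).getD j 0 + 2 * j, (u.sort (· ≤ ·)).getD j 0 + 2 * j + 1}) ∪
    Finset.Icc (n + 2 * Multiset.card u - d) n

/-- The squeezed `d`-ball `B_d(U)`: the complex generated by `{F_d(u) : u ∈ U}`. -/
def squeezedBall (n d : ℕ) (U : Set (Multiset ℕ)) : Set (Finset ℕ) :=
  {G | ∃ u ∈ U, G ⊆ Fd n d u}

/-- The boundary of a pure `d`-dimensional complex `B`: the subcomplex generated by the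
`(d-1)`-dimensional faces (cardinality-`d` faces) contained in exactly one facet. -/
noncomputable def complexBoundary (d : ℕ) (B : Set (Finset ℕ)) : Set (Finset ℕ) :=
  {F | ∃ G, F ⊆ G ∧ G ∈ B ∧ G.card = d ∧
    {H | H ∈ B ∧ H.card = d + 1 ∧ G ⊆ H}.ncard = 1}

/-- The squeezed `(d-1)`-sphere `S_d(U) = ∂ B_d(U)`. -/
noncomputable def squeezedSphere (n d : ℕ) (U : Set (Multiset ℕ)) : Set (Finset ℕ) :=
  complexBoundary d (squeezedBall n d U)

/-! The Stanley–Reisner ideal, the degree reverse lexicographic order, initial ideals and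
generic initial ideals in the polynomial ring `K[x_1,…,x_n]`, realized as
`MvPolynomial (Fin n) K` with the variable `x_i` being `X ⟨i-1⟩`. -/

/-- The squarefree monomial `x_F = ∏_{i ∈ F} x_i` (variable `x_i`, `1 ≤ i ≤ n`, is `X ⟨i-1⟩`). -/
noncomputable def faceMonomial (K : Type*) [CommRing K] (n : ℕ) (F : Finset ℕ) :
    MvPolynomial (Fin n) K :=
  ∏ a ∈ Finset.univ.filter (fun a : Fin n => (a : ℕ) + 1 ∈ F), MvPolynomial.X a

/-- The Stanley–Reisner ideal of a complex `Γ` on `[n]`, generated by the squarefree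
monomials `x_F` with `F ⊆ [n]`, `F ∉ Γ`. -/
noncomputable def srIdeal (K : Type*) [CommRing K] (n : ℕ) (Γ : Set (Finset ℕ)) :
    Ideal (MvPolynomial (Fin n) K) :=
  Ideal.span {f | ∃ F : Finset ℕ, F ⊆ Finset.Icc 1 n ∧ F ∉ Γ ∧ f = faceMonomial K n F}

/-- The degree reverse lexicographic order (induced by `x_1 > x_2 > ⋯`, smaller index =
bigger variable): `u < v` iff `deg u < deg v`, or degrees agree and at the largest index
where `u, v` differ, `u` has the larger exponent. -/
def DegRevLexLT {σ : Type*} [LinearOrder σ] (u v : σ →₀ ℕ) : Prop :=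
  (u.sum fun _ e => e) < (v.sum fun _ e => e) ∨
    ((u.sum fun _ e => e) = (v.sum fun _ e => e) ∧
      ∃ k, v k < u k ∧ ∀ l, k < l → u l = v l)

/-- The initial ideal of `I` w.r.t. the degree reverse lexicographic order: the ideal
spanned by the leading monomials of the elements of `I`. -/
noncomputable def initialIdeal {σ : Type*} [LinearOrder σ] {K : Type*} [Field K]
    (I : Ideal (MvPolynomial σ K)) : Ideal (MvPolynomial σ K) :=
  Ideal.span {m | ∃ f ∈ I, ∃ u ∈ f.support, m = MvPolynomial.monomial u (1 : K) ∧
    ∀ v ∈ f.support, v ≠ u → DegRevLexLT v u}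

/-- The linear change of coordinates of `K[x_1,…,x_n]` associated with a matrix `M`,
`x_j ↦ ∑_i M_{ij} x_i`. -/
noncomputable def genLin {K : Type*} [CommRing K] {n : ℕ} (M : Matrix (Fin n) (Fin n) K) :
    MvPolynomial (Fin n) K →ₐ[K] MvPolynomial (Fin n) K :=
  MvPolynomial.aeval (fun j => ∑ a : Fin n, MvPolynomial.C (M a j) * MvPolynomial.X a)

/-- `J` is the generic initial ideal (w.r.t. degrevlex) of `I`: there is a nonempty Zariski
open subset `U ⊆ GL_n(K)` (the nonvanishing locus of a nonzero polynomial in the matrix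
entries) such that `in(φ(I)) = J` for every `φ ∈ U`. -/
def IsGin {K : Type*} [Field K] {n : ℕ} (I J : Ideal (MvPolynomial (Fin n) K)) : Prop :=
  ∃ p : MvPolynomial (Fin n × Fin n) K, p ≠ 0 ∧
    ∀ M : Matrix (Fin n) (Fin n) K, IsUnit M.det →
      MvPolynomial.eval (fun q => M q.1 q.2) p ≠ 0 →
      initialIdeal (Ideal.map (genLin M) I) = J

/-- The set `G(J)` of (exponent vectors of) minimal monomial generators of a monomial
ideal `J`. -/
def minimalMonomialGens {σ : Type*} {K : Type*} [Field K] (J : Ideal (MvPolynomial σ K)) :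
    Set (σ →₀ ℕ) :=
  {u | MvPolynomial.monomial u (1 : K) ∈ J ∧
    ∀ v : σ →₀ ℕ, v ≤ u → MvPolynomial.monomial v (1 : K) ∈ J → v = u}

/-- The squarefree operation `Φ` on exponent vectors:
`x_{i_1} x_{i_2} ⋯ x_{i_k} ↦ {i_1, i_2+1, …, i_k+k-1}` (`i_1 ≤ i_2 ≤ ⋯ ≤ i_k`). -/
noncomputable def sqfreeOp {n : ℕ} (u : Fin n →₀ ℕ) : Finset ℕ :=
  (List.zipWith (· + ·)
      ((u.toMultiset.map (fun a : Fin n => (a : ℕ) + 1)).sort (· ≤ ·))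
      (List.range (Multiset.card (u.toMultiset)))).toFinset

/-- `Δs` is the symmetric algebraic shifted complex of `Γ`: its Stanley–Reisner ideal is
`Φ(Gin(I_Γ))`, i.e. `Δs` consists of the `F ⊆ [n]` containing no `Φ(u)`, `u ∈ G(Gin(I_Γ))`. -/
def IsSymmetricShift (K : Type*) [Field K] (n : ℕ) (Γ Δs : Set (Finset ℕ)) : Prop :=
  ∃ J : Ideal (MvPolynomial (Fin n) K), IsGin (srIdeal K n Γ) J ∧
    Δs = {F | F ⊆ Finset.Icc 1 n ∧ ∀ u ∈ minimalMonomialGens J, ¬ sqfreeOp u ⊆ F}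

/-- The exponent vector (in `K[x_1,…,x_n]`) of a monomial given as a multiset. -/
noncomputable def multisetToExp (n : ℕ) (u : Multiset ℕ) : Fin n →₀ ℕ :=
  Finsupp.equivFunOnFinite.symm (fun a : Fin n => u.count ((a : ℕ) + 1))
/-! The exterior algebra `E = ⋀⟨e_1, e_2, …⟩` over `K`, exterior face ideals, the reverse
lexicographic order, initial ideals and exterior algebraic shifting. We realize `E` as the
exterior algebra of the `K`-module `ℕ → K`, with `e_i` the image of `Pi.single i 1`. -/

/-- The exterior algebra `⋀ (ℕ → K)` hosting all the exterior face ideals. -/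
abbrev ExtAlg (K : Type*) [Field K] := ExteriorAlgebra K (ℕ → K)

/-- The exterior monomial `e_F = e_{i_1} ∧ ⋯ ∧ e_{i_k}` for `F = {i_1 < ⋯ < i_k}`. -/
noncomputable def eMon (K : Type*) [Field K] (F : Finset ℕ) : ExtAlg K :=
  ((F.sort (· ≤ ·)).map (fun i => ExteriorAlgebra.ι K (Pi.single i (1 : K)))).prod

/-- The exterior face ideal `J_Γ` of a complex `Γ` on the vertex set `V`, generated by the
monomials `e_F` with `F ⊆ V`, `F ∉ Γ`. -/
noncomputable def extFaceIdeal (K : Type*) [Field K] (V : Finset ℕ) (Γ : Set (Finset ℕ)) :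
    Ideal (ExtAlg K) :=
  Ideal.span {x | ∃ F : Finset ℕ, F ⊆ V ∧ F ∉ Γ ∧ x = eMon K F}

/-- The alternating form computing the determinant of the coordinates indexed by `F`. -/
noncomputable def detCoeffAlt (K : Type*) [Field K] (F : Finset ℕ) :
    (ℕ → K) [⋀^Fin F.card]→ₗ[K] K :=
  (Matrix.detRowAlternating).compLinearMap
    (LinearMap.funLeft K K (fun b : Fin F.card => ((F.orderIsoOfFin rfl b : F) : ℕ)))

/-- The coefficient functional of the basis monomial `e_F`: the linear functional on the
exterior algebra giving the coefficient of `e_F` in the monomial basis expansion. -/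
noncomputable def extCoeff (K : Type*) [Field K] (F : Finset ℕ) : ExtAlg K →ₗ[K] K :=
  ExteriorAlgebra.liftAlternating
    (fun i => if h : i = F.card then (detCoeffAlt K F).domDomCongr (finCongr h.symm) else 0)

/-- The reverse lexicographic order (induced by `1 > 2 > ⋯`) on exterior monomials:
`F < G` iff `|F| < |G|`, or the cardinalities agree and the largest element of the
symmetric difference `F Δ G` belongs to `F`. -/
def RevLexLT (F G : Finset ℕ) : Prop :=
  F.card < G.card ∨ (F.card = G.card ∧
    ∃ k, k ∈ F ∧ k ∉ G ∧ ∀ l, k < l → (l ∈ F ↔ l ∈ G))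

/-- The initial ideal of an ideal `I` of the exterior algebra w.r.t. the reverse
lexicographic order: spanned by the leading monomials `e_F` of the elements of `I`. -/
noncomputable def extInitialIdeal (K : Type*) [Field K] (I : Ideal (ExtAlg K)) :
    Ideal (ExtAlg K) :=
  Ideal.span {x | ∃ y ∈ I, ∃ F : Finset ℕ, x = eMon K F ∧ extCoeff K F y ≠ 0 ∧
    ∀ G : Finset ℕ, extCoeff K G y ≠ 0 → G ≠ F → RevLexLT G F}

/-- The linear change of coordinates of `span{e_i : i ∈ V}` (identity elsewhere)
associated with a `|V| × |V|` matrix `M`. -/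
noncomputable def extLinMap (K : Type*) [Field K] (V : Finset ℕ)
    (M : Matrix (Fin V.card) (Fin V.card) K) : (ℕ → K) →ₗ[K] (ℕ → K) where
  toFun v k :=
    if h : k ∈ V then
      ∑ a : Fin V.card,
        M ((V.orderIsoOfFin rfl).symm ⟨k, h⟩) a * v ((V.orderIsoOfFin rfl a : V) : ℕ)
    else v k
  map_add' x y := by
    funext k
    by_cases h : k ∈ V <;> simp [h, mul_add, Finset.sum_add_distrib]
  map_smul' c x := by
    funext k
    by_cases h : k ∈ V <;> simp [h, Finset.mul_sum, mul_left_comm]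

/-- The algebra automorphism of the exterior algebra induced by `extLinMap`. -/
noncomputable def extAlgMap (K : Type*) [Field K] (V : Finset ℕ)
    (M : Matrix (Fin V.card) (Fin V.card) K) : ExtAlg K →ₐ[K] ExtAlg K :=
  ExteriorAlgebra.lift K ⟨(ExteriorAlgebra.ι K).comp (extLinMap K V M),
    fun _ => ExteriorAlgebra.ι_sq_zero _⟩

/-- `Δe` is the exterior algebraic shifted complex of `Γ` (as complexes on the vertex set
`V`): `J_{Δe} = Gin(J_Γ)`, where the generic initial ideal is witnessed by a nonempty
Zariski open subset of `GL(V)` (the nonvanishing locus of a nonzero polynomial in the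
matrix entries). -/
def IsExteriorShift (K : Type*) [Field K] (V : Finset ℕ) (Γ Δe : Set (Finset ℕ)) : Prop :=
  ∃ p : MvPolynomial (Fin V.card × Fin V.card) K, p ≠ 0 ∧
    ∀ M : Matrix (Fin V.card) (Fin V.card) K, IsUnit M.det →
      MvPolynomial.eval (fun q => M q.1 q.2) p ≠ 0 →
      extInitialIdeal K (Ideal.map (extAlgMap K V M) (extFaceIdeal K V Γ)) =
        extFaceIdeal K V Δe

/-- The simplicial complex on `V` whose exterior face ideal is the (monomial) ideal `J`. -/
noncomputable def complexOfExtIdeal (K : Type*) [Field K] (V : Finset ℕ)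
    (J : Ideal (ExtAlg K)) : Set (Finset ℕ) :=
  {F | F ⊆ V ∧ eMon K F ∉ J}

/-- Nongeneric exterior shifting `Δ_φ(Γ)`, defined by `J_{Δ_φ(Γ)} = in(φ(J_Γ))` for an
individual linear change of coordinates `φ` given by the matrix `M`. -/
noncomputable def DeltaPhi (K : Type*) [Field K] (V : Finset ℕ)
    (M : Matrix (Fin V.card) (Fin V.card) K) (Γ : Set (Finset ℕ)) : Set (Finset ℕ) :=
  complexOfExtIdeal K V (extInitialIdeal K (Ideal.map (extAlgMap K V M) (extFaceIdeal K V Γ)))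

/-- The shifting-theoretic upper bound relation for a `(d-1)`-dimensional complex `Γ` on the
vertex set `V`: `Δᵉ(Γ) ⊆ Δ(V,d)`. -/
def ShiftingUBR (K : Type*) [Field K] (V : Finset ℕ) (d : ℕ) (Γ : Set (Finset ℕ)) : Prop :=
  ∀ Δe, IsExteriorShift K V Γ Δe → Δe ⊆ DeltaV V d
/-! Graded pieces, linear systems of parameters, the Cohen–Macaulay property and the strong
Lefschetz property for graded quotients `A = K[x_1,…,x_n]/I`. -/

/-- The degree-`k` homogeneous component of the graded quotient `S/I` (the image of the
degree-`k` homogeneous polynomials). -/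
noncomputable def quotPiece {K : Type*} [Field K] {n : ℕ}
    (I : Ideal (MvPolynomial (Fin n) K)) (k : ℕ) :
    Submodule K (MvPolynomial (Fin n) K ⧸ I) :=
  (MvPolynomial.homogeneousSubmodule (Fin n) K k).map (Ideal.Quotient.mkₐ K I).toLinearMap

/-- `θ_1, …, θ_d` is a linear system of parameters of `S/I`: the `θ_a` are linear forms and
the quotient `S/(I + (θ_1,…,θ_d))` has Krull dimension `≤ 0`. -/
def IsLSOP {K : Type*} [Field K] {n : ℕ} (I : Ideal (MvPolynomial (Fin n) K)) (d : ℕ)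
    (θ : Fin d → MvPolynomial (Fin n) K) : Prop :=
  (∀ a, (θ a).IsHomogeneous 1) ∧
    ringKrullDim (MvPolynomial (Fin n) K ⧸ (I ⊔ Ideal.span (Set.range θ))) ≤ 0

set_option synthInstance.maxHeartbeats 1000000 in
/-- The graded quotient `A = S/I` is Cohen–Macaulay: a linear system of parameters of
length `d = dim A` forms a regular `A`-sequence. -/
def IsCMIdeal {K : Type*} [Field K] {n : ℕ} (I : Ideal (MvPolynomial (Fin n) K)) : Prop :=
  ∃ d : ℕ, ringKrullDim (MvPolynomial (Fin n) K ⧸ I) = d ∧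
    ∃ θ : Fin d → MvPolynomial (Fin n) K, IsLSOP I d θ ∧
      RingTheory.Sequence.IsRegular (MvPolynomial (Fin n) K ⧸ I)
        ((List.ofFn θ).map (⇑(Ideal.Quotient.mk I)))

/-- The graded quotient `A = S/I` has the strong Lefschetz property: `A` is Cohen–Macaulay
and there are an l.s.o.p. `θ_1, …, θ_d` (`d = dim A`) and a linear form `ω` such that
`ω^{s-2i} : (A/θA)_i → (A/θA)_{s-i}` is bijective for `0 ≤ i ≤ s/2`, where
`s = max{k : (A/θA)_k ≠ 0}`. -/
def HasSLPIdeal {K : Type*} [Field K] {n : ℕ} (I : Ideal (MvPolynomial (Fin n) K)) : Prop :=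
  IsCMIdeal I ∧
    ∃ d : ℕ, ringKrullDim (MvPolynomial (Fin n) K ⧸ I) = d ∧
      ∃ θ : Fin d → MvPolynomial (Fin n) K, IsLSOP I d θ ∧
        ∃ ω : MvPolynomial (Fin n) K, ω.IsHomogeneous 1 ∧
          ∃ s : ℕ,
            (quotPiece (I ⊔ Ideal.span (Set.range θ)) s ≠ ⊥ ∧
              ∀ k, s < k → quotPiece (I ⊔ Ideal.span (Set.range θ)) k = ⊥) ∧
            ∀ i : ℕ, 2 * i ≤ s →
              Set.BijOn
                (fun x => (Ideal.Quotient.mk (I ⊔ Ideal.span (Set.range θ)) ω) ^ (s - 2 * i) * x)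
                (quotPiece (I ⊔ Ideal.span (Set.range θ)) i)
                (quotPiece (I ⊔ Ideal.span (Set.range θ)) (s - i))

/-- A simplicial complex is Cohen–Macaulay over `K` if its Stanley–Reisner ring is. -/
def ComplexCM (K : Type*) [Field K] (n : ℕ) (Γ : Set (Finset ℕ)) : Prop :=
  IsCMIdeal (srIdeal K n Γ)

/-- A `(d-1)`-dimensional complex `Γ` has the strong Lefschetz property if `h_d(Γ) > 0` and
its Stanley–Reisner ring has the strong Lefschetz property. -/
def ComplexSLP (K : Type*) [Field K] (n d : ℕ) (Γ : Set (Finset ℕ)) : Prop :=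
  0 < hvec d Γ d ∧ HasSLPIdeal (srIdeal K n Γ)

/-- A `1`-dimensional simplicial sphere (a cycle): a complex all of whose faces are edges or
smaller, every vertex lying in exactly two edges, whose edge graph is connected. -/
def IsCycleComplex (V : Finset ℕ) (Γ : Set (Finset ℕ)) : Prop :=
  SimplicialComplexOn V Γ ∧ (∀ F ∈ Γ, F.card ≤ 2) ∧
    (∀ v ∈ V, {e | e ∈ Γ ∧ e.card = 2 ∧ v ∈ e}.ncard = 2) ∧
    ∀ u ∈ V, ∀ v ∈ V,
      Relation.ReflTransGen (fun a b : ℕ => ({a, b} : Finset ℕ) ∈ Γ) u v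


/-! ### Counting elements below a threshold -/

/-- The number of elements of `F` strictly below `x`. -/
def countBelow (F : Finset ℕ) (x : ℕ) : ℕ := (F.filter (· < x)).card

theorem countBelow_zero (F : Finset ℕ) : countBelow F 0 = 0 := by
  simp [countBelow]

theorem countBelow_succ_of_mem {F : Finset ℕ} {x : ℕ} (hx : x ∈ F) :
    countBelow F (x + 1) = countBelow F x + 1 := by
  unfold countBelow
  rw [← Finset.card_insert_of_notMem (a := x) (s := F.filter (· < x)) (by simp)]
  congr 1
  ext y
  simp only [Finset.mem_filter, Finset.mem_insert]
  constructor
  · rintro ⟨h, h'⟩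
    rcases Nat.lt_succ_iff_lt_or_eq.1 h' with h' | h'
    · exact Or.inr ⟨h, h'⟩
    · exact Or.inl h'
  · rintro (rfl | ⟨h, h'⟩)
    · exact ⟨hx, by omega⟩
    · exact ⟨h, by omega⟩

theorem countBelow_succ_of_notMem {F : Finset ℕ} {x : ℕ} (hx : x ∉ F) :
    countBelow F (x + 1) = countBelow F x := by
  unfold countBelow
  congr 1
  ext y
  simp only [Finset.mem_filter]
  constructor
  · rintro ⟨h, h'⟩
    refine ⟨h, lt_of_le_of_ne (by omega) ?_⟩
    rintro rfl
    exact hx h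
  · rintro ⟨h, h'⟩
    exact ⟨h, by omega⟩

theorem countBelow_succ_le (F : Finset ℕ) (x : ℕ) :
    countBelow F (x + 1) ≤ countBelow F x + 1 := by
  by_cases hx : x ∈ F
  · rw [countBelow_succ_of_mem hx]
  · rw [countBelow_succ_of_notMem hx]; omega

theorem countBelow_mono (F : Finset ℕ) : Monotone (countBelow F) := by
  intro x y hxy
  apply Finset.card_le_card
  intro z
  simp only [Finset.mem_filter]
  exact fun h => ⟨h.1, h.2.trans_le hxy⟩

theorem countBelow_add_le (F : Finset ℕ) (x k : ℕ) :
    countBelow F (x + k) ≤ countBelow F x + k := by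
  induction k with
  | zero => simp
  | succ k ih =>
    have := countBelow_succ_le F (x + k)
    rw [← add_assoc]
    omega

theorem countBelow_eq_card {F : Finset ℕ} {n : ℕ} (hF : F ⊆ Finset.Icc 1 n) {x : ℕ}
    (hx : n < x) : countBelow F x = F.card := by
  unfold countBelow
  congr 1
  rw [Finset.filter_eq_self]
  intro y hy
  have := Finset.mem_Icc.1 (hF hy)
  omega

theorem countBelow_insert_erase {F : Finset ℕ} {v w : ℕ} (hv : v ∈ F) (hw : w ∉ F) (x : ℕ) :
    countBelow (insert w (F.erase v)) x + (if v < x then 1 else 0) =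
      countBelow F x + (if w < x then 1 else 0) := by
  unfold countBelow
  have hwe : w ∉ (F.erase v).filter (· < x) := by
    simp [hw]
  have h1 : ((F.erase v).filter (· < x)).card + (if v < x then 1 else 0) =
      (F.filter (· < x)).card := by
    rw [Finset.filter_erase]
    split_ifs with h
    · exact Finset.card_erase_add_one (by simp [hv, h])
    · rw [Finset.erase_eq_of_notMem (by simp [h])]; rfl
  rw [Finset.filter_insert]
  by_cases h : w < x
  · rw [if_pos h, if_pos h, Finset.card_insert_of_notMem hwe]; omega
  · rw [if_neg h, if_neg h]; omega

theorem exists_mem_countBelow_eq {F : Finset ℕ} {n i : ℕ} (hF : F ⊆ Finset.Icc 1 n)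
    (hi : i < F.card) : ∃ x ∈ F, countBelow F x = i := by
  have hex : ∃ x, i < countBelow F x := ⟨n + 1, by rwa [countBelow_eq_card hF (by omega)]⟩
  classical
  have hspec := Nat.find_spec hex
  have hmin := fun y => Nat.find_min hex (m := y)
  generalize Nat.find hex = x at hspec hmin
  cases x with
  | zero => simp [countBelow_zero] at hspec
  | succ x =>
    have h1 := hmin x (by omega)
    have h2 : x ∈ F := by
      by_contra hx
      rw [countBelow_succ_of_notMem hx] at hspec
      exact h1 hspec
    rw [countBelow_succ_of_mem h2] at hspec
    exact ⟨x, h2, by omega⟩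

/-! ### The evenness condition -/

/-- A `(d+1)`-subset of `[n]` all of whose maximal intervals not ending at `n` have even
cardinality: every element of `[n] ∖ F` has an even number of elements of `F` below it. -/
def EvenBlocks (n d : ℕ) (F : Finset ℕ) : Prop :=
  F ⊆ Finset.Icc 1 n ∧ F.card = d + 1 ∧
    ∀ x ∈ Finset.Icc 1 n, x ∉ F → Even (countBelow F x)

section Exchange

variable {n d : ℕ} {F : Finset ℕ} {v w : ℕ}

theorem EvenBlocks.two_mem (hF : EvenBlocks n d F) (hn : 2 ≤ n) (h1 : 1 ∈ F) : 2 ∈ F := by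
  by_contra h2
  have h := hF.2.2 2 (by simp [hn]) h2
  have h0 : (0 : ℕ) ∉ F := fun h => by simpa using hF.1 h
  rw [countBelow_succ_of_mem h1, countBelow_succ_of_notMem h0, countBelow_zero] at h
  simp at h

theorem EvenBlocks.exchange_lt (hF : EvenBlocks n d F) (hv : v ∈ F) (hw : w ∉ F)
    (hF' : EvenBlocks n d (insert w (F.erase v))) (ho : ¬ Even (countBelow F v)) : w < v := by
  have hvw : v ≠ w := fun h => hw (h ▸ hv)
  by_contra hlt
  have h := hF'.2.2 v (hF.1 hv) (by simp [hvw])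
  have h' := countBelow_insert_erase hv hw v
  rw [if_neg (lt_irrefl v), if_neg hlt] at h'
  simp only [add_zero] at h'
  exact ho (h' ▸ h)

theorem EvenBlocks.lt_exchange (hF : EvenBlocks n d F) (hv : v ∈ F) (hw : w ∉ F)
    (hF' : EvenBlocks n d (insert w (F.erase v))) (he : Even (countBelow F v)) : v < w := by
  have hvw : v ≠ w := fun h => hw (h ▸ hv)
  by_contra hlt
  have h := hF'.2.2 v (hF.1 hv) (by simp [hvw])
  have h' := countBelow_insert_erase hv hw v
  rw [if_neg (lt_irrefl v), if_pos (by omega)] at h'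
  simp only [Nat.even_iff] at *
  omega

theorem EvenBlocks.exchange_unique (hF : EvenBlocks n d F) (hv : v ∈ F)
    (he : Even (countBelow F v)) {w' : ℕ} (hw : w ∉ F) (hw' : w' ∉ F)
    (hFw : EvenBlocks n d (insert w (F.erase v)))
    (hFw' : EvenBlocks n d (insert w' (F.erase v))) : w = w' := by
  have key : ∀ {a b : ℕ}, a ∉ F → b ∉ F → EvenBlocks n d (insert a (F.erase v)) →
      EvenBlocks n d (insert b (F.erase v)) → ¬ a < b := by
    intro a b ha hb hFa hFb hab
    have hva := hF.lt_exchange hv ha hFa he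
    have han : a ∈ Finset.Icc 1 n := hFa.1 (Finset.mem_insert_self _ _)
    have h1 := hF.2.2 a han ha
    have h2 := hFb.2.2 a han (by simp [hab.ne, ha])
    have h3 := countBelow_insert_erase hv hb a
    rw [if_pos hva, if_neg (by omega)] at h3
    simp only [Nat.even_iff] at *
    omega
  have h1 := key hw hw' hFw hFw'
  have h2 := key hw' hw hFw' hFw
  omega

theorem EvenBlocks.card_exchange (hF : EvenBlocks n d F) (hv : v ∈ F) (hw : w ∉ F) :
    (insert w (F.erase v)).card = d + 1 := by
  rw [Finset.card_insert_of_notMem (by simp [hw]), Finset.card_erase_add_one hv, hF.2.1]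

theorem EvenBlocks.exists_exchange_up (hF : EvenBlocks n d F) (hv : v ∈ F)
    (he : Even (countBelow F v)) (hgap : ∃ w, v < w ∧ w ≤ n ∧ w ∉ F) :
    ∃ w, v < w ∧ w ∉ F ∧ EvenBlocks n d (insert w (F.erase v)) := by
  classical
  have hmin := fun y => Nat.find_min hgap (m := y)
  obtain ⟨hvw, hwn, hw⟩ := Nat.find_spec hgap
  generalize Nat.find hgap = w at *
  have hv1 := Finset.mem_Icc.1 (hF.1 hv)
  refine ⟨w, hvw, hw, ?_, hF.card_exchange hv hw, ?_⟩
  · intro y hy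
    rcases Finset.mem_insert.1 hy with rfl | hy
    · exact Finset.mem_Icc.2 ⟨by omega, hwn⟩
    · exact hF.1 (Finset.mem_of_mem_erase hy)
  · intro x hx hxF
    have hc := countBelow_insert_erase hv hw x
    by_cases hxv : x = v
    · subst hxv
      rw [if_neg (lt_irrefl x), if_neg (by omega)] at hc
      simp only [add_zero] at hc
      rwa [hc]
    · have hxF' : x ∉ F := fun h => hxF (by simp [hxv, h])
      have hxw : x ≠ w := fun h => hxF (by simp [h])
      have he' := hF.2.2 x hx hxF'
      have : v < x ↔ w < x := by
        constructor
        · intro h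
          by_contra h'
          exact hmin x (by omega) ⟨h, (Finset.mem_Icc.1 hx).2, hxF'⟩
        · omega
      simp only [this, add_left_inj] at hc
      rwa [hc]

theorem EvenBlocks.exists_exchange_down (hF : EvenBlocks n d F) (hv : v ∈ F)
    (ho : ¬ Even (countBelow F v)) (h1v : 1 ≤ v) (h1 : 1 ∉ F) :
    ∃ w, w ∉ F ∧ EvenBlocks n d (insert w (F.erase v)) := by
  classical
  have hv1 := Finset.mem_Icc.1 (hF.1 hv)
  have h1v' : 1 ≠ v := fun h => h1 (h ▸ hv)
  have hex : ∃ k, k < v ∧ 1 ≤ v - k ∧ v - k ∉ F :=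
    ⟨v - 1, by omega, by omega, by rwa [show v - (v - 1) = 1 by omega]⟩
  have hmin := fun y => Nat.find_min hex (m := y)
  obtain ⟨hkv, hk1, hk⟩ := Nat.find_spec hex
  generalize Nat.find hex = k at *
  have hk0 : k ≠ 0 := by
    rintro rfl
    exact hk (by simpa using hv)
  refine ⟨v - k, hk, ?_, hF.card_exchange hv hk, ?_⟩
  · intro y hy
    rcases Finset.mem_insert.1 hy with rfl | hy
    · exact Finset.mem_Icc.2 ⟨by omega, by omega⟩
    · exact hF.1 (Finset.mem_of_mem_erase hy)
  · intro x hx hxF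
    have hc := countBelow_insert_erase hv hk x
    by_cases hxv : x = v
    · subst hxv
      rw [if_neg (lt_irrefl x), if_pos (by omega)] at hc
      simp only [Nat.even_iff] at *
      omega
    · have hxF' : x ∉ F := fun h => hxF (by simp [hxv, h])
      have hxw : x ≠ v - k := fun h => hxF (by simp [h])
      have he' := hF.2.2 x hx hxF'
      have hx1 := Finset.mem_Icc.1 hx
      have : v < x ↔ v - k < x := by
        constructor
        · omega
        · intro h
          by_contra h'
          refine hmin (v - x) (by omega) ⟨by omega, by omega, ?_⟩
          rwa [show v - (v - x) = x by omega]
      simp only [this, add_left_inj] at hc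
      rwa [hc]

theorem EvenBlocks.exists_gap (hF : EvenBlocks n d F) (hn : d + 1 < n) :
    ∃ w ∈ Finset.Icc 1 n, w ∉ F := by
  by_contra! h
  have := Finset.card_le_card (show Finset.Icc 1 n ⊆ F from h)
  rw [Nat.card_Icc, hF.2.1] at this
  omega

/-- A set containing a `d`-subset of `F` is obtained from `F` by exchanging one element. -/
theorem eq_insert_erase_of_erase_subset {F F' : Finset ℕ} {v : ℕ} (hv : v ∈ F)
    (hcard : F.card = F'.card) (hne : F' ≠ F) (hsub : F.erase v ⊆ F') :
    ∃ w, w ∉ F ∧ F' = insert w (F.erase v) := by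
  have hc : F'.card = (F.erase v).card + 1 := by
    rw [Finset.card_erase_add_one hv, hcard]
  obtain ⟨w, hw⟩ : ∃ w, F' \ F.erase v = {w} := by
    rw [← Finset.card_eq_one, Finset.card_sdiff_of_subset hsub]; omega
  have hF' : F' = insert w (F.erase v) := by
    rw [Finset.insert_eq, ← hw, Finset.sdiff_union_of_subset hsub]
  refine ⟨w, fun hwF => hne ?_, hF'⟩
  have hwe : w ∉ F.erase v := by
    have : w ∈ F' \ F.erase v := by simp [hw]
    exact (Finset.mem_sdiff.1 this).2
  have : w = v := by
    by_contra h
    exact hwe (Finset.mem_erase.2 ⟨h, hwF⟩)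
  rw [hF', this, Finset.insert_erase hv]

end Exchange

/-! ### Complexes generated by families of sets with even blocks -/

/-- The simplicial complex generated by a family of sets. -/
def generatedBy (A : Set (Finset ℕ)) : Set (Finset ℕ) := {G | ∃ F ∈ A, G ⊆ F}

theorem mem_complexBoundary_generatedBy {A : Set (Finset ℕ)} {e : ℕ}
    (hA : ∀ F ∈ A, F.card = e + 1) {X : Finset ℕ} :
    X ∈ complexBoundary e (generatedBy A) ↔
      ∃ G, X ⊆ G ∧ G.card = e ∧ ∃! F, F ∈ A ∧ G ⊆ F := by
  have key : ∀ G : Finset ℕ, {H | H ∈ generatedBy A ∧ H.card = e + 1 ∧ G ⊆ H} =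
      {H | H ∈ A ∧ G ⊆ H} := by
    intro G
    ext H
    constructor
    · rintro ⟨⟨F, hF, hHF⟩, hH, hG⟩
      rw [Finset.eq_of_subset_of_card_le hHF (by rw [hA F hF, hH])]
      exact ⟨hF, hG.trans hHF⟩
    · rintro ⟨hH, hG⟩
      exact ⟨⟨H, hH, subset_rfl⟩, hA H hH, hG⟩
  constructor
  · rintro ⟨G, hXG, -, hG, h1⟩
    refine ⟨G, hXG, hG, ?_⟩
    rw [key, Set.ncard_eq_one] at h1
    obtain ⟨F, hF⟩ := h1
    have hm : ∀ H, (H ∈ A ∧ G ⊆ H) ↔ H = F := fun H => by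
      rw [← Set.mem_singleton_iff, ← hF]; rfl
    exact ⟨F, (hm F).2 rfl, fun H hH => (hm H).1 hH⟩
  · rintro ⟨G, hXG, hG, F, hF, huniq⟩
    refine ⟨G, hXG, ⟨F, hF⟩, hG, ?_⟩
    rw [key, Set.ncard_eq_one]
    refine ⟨F, ?_⟩
    ext H
    constructor
    · exact huniq H
    · rintro rfl
      exact hF

theorem complexBoundary_down_closed {e : ℕ} {B : Set (Finset ℕ)} :
    ∀ F ∈ complexBoundary e B, ∀ G, G ⊆ F → G ∈ complexBoundary e B := by
  rintro F ⟨H, hFH, h⟩ G hGF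
  exact ⟨H, hGF.trans hFH, h⟩

/-- A family of sets with even blocks which is closed under moving elements to the right. -/
structure ShiftedEvenFamily (n d : ℕ) (A : Set (Finset ℕ)) : Prop where
  evenBlocks : ∀ F ∈ A, EvenBlocks n d F
  up_closed : ∀ F ∈ A, ∀ F', EvenBlocks n d F' →
    (∀ x, countBelow F' x ≤ countBelow F x) → F' ∈ A

namespace ShiftedEvenFamily

variable {n d : ℕ} {A : Set (Finset ℕ)}

theorem card_eq (hA : ShiftedEvenFamily n d A) : ∀ F ∈ A, F.card = d + 1 :=
  fun F hF => (hA.evenBlocks F hF).2.1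

theorem exchange_mem (hA : ShiftedEvenFamily n d A) {F : Finset ℕ} (hF : F ∈ A) {v w : ℕ}
    (hv : v ∈ F) (hw : w ∉ F) (hvw : v < w) (h : EvenBlocks n d (insert w (F.erase v))) :
    insert w (F.erase v) ∈ A := by
  refine hA.up_closed F hF _ h fun x => ?_
  have := countBelow_insert_erase hv hw x
  split_ifs at this <;> omega

theorem existsUnique_exchange_one (hA : ShiftedEvenFamily n d A) (hn : d + 1 < n)
    {F : Finset ℕ} (hF : F ∈ A) (h1 : 1 ∈ F) :
    ∃! F', F' ∈ {F ∈ A | 1 ∉ F} ∧ F.erase 1 ⊆ F' := by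
  have hE := hA.evenBlocks F hF
  have he : Even (countBelow F 1) := by
    have h0 : (0 : ℕ) ∉ F := fun h => by simpa using hE.1 h
    rw [countBelow_succ_of_notMem h0, countBelow_zero]
    exact Even.zero
  obtain ⟨g, hg, hgF⟩ := hE.exists_gap hn
  have hg1 : g ≠ 1 := fun h => hgF (h ▸ h1)
  have hgI := Finset.mem_Icc.1 hg
  obtain ⟨w, hw1, hwF, hwE⟩ := hE.exists_exchange_up h1 he ⟨g, by omega, hgI.2, hgF⟩
  refine ⟨insert w (F.erase 1), ⟨⟨hA.exchange_mem hF h1 hwF hw1 hwE, ?_⟩,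
    Finset.subset_insert _ _⟩, ?_⟩
  · simp [hw1.ne]
  · rintro F' ⟨⟨hF', h1F'⟩, hsub⟩
    obtain ⟨w', hw'F, rfl⟩ := eq_insert_erase_of_erase_subset h1
      (by rw [hE.2.1, hA.card_eq F' hF']) (fun h : F' = F => h1F' (h ▸ h1)) hsub
    rw [hE.exchange_unique h1 he hw'F hwF (hA.evenBlocks _ hF') hwE]

/-- If `H ∪ {2}` contains all elements of `F` with an odd number of predecessors in `F`, then
every set with even blocks containing `H ∪ {2}` lies to the right of `F`. -/
theorem countBelow_le_of_odd_mem {F F' H : Finset ℕ} (hF : EvenBlocks n d F)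
    (hF' : EvenBlocks n d F') (h0 : ∀ v ∈ F, v ∉ H → v ≠ 2 → Even (countBelow F v))
    (hH : H ⊆ F') (h2 : 2 ∈ F') (x : ℕ) : countBelow F' x ≤ countBelow F x := by
  by_contra! hx
  classical
  have hex : ∃ x, countBelow F x < countBelow F' x := ⟨x, hx⟩
  have hspec := Nat.find_spec hex
  generalize Nat.find hex = y at hspec
  have key : ∀ k, countBelow F (y + k) < countBelow F' (y + k) := by
    intro k
    induction k with
    | zero => exact hspec
    | succ k ih =>
      rw [← add_assoc]
      set z := y + k
      by_cases hzF' : z ∈ F'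
      · rw [countBelow_succ_of_mem hzF']
        have := countBelow_succ_le F z
        omega
      · rw [countBelow_succ_of_notMem hzF']
        by_cases hzF : z ∈ F
        · have hz := h0 z hzF (fun h => hzF' (hH h)) (fun h => hzF' (h ▸ h2))
          have hz' := hF'.2.2 z (hF.1 hzF) hzF'
          rw [countBelow_succ_of_mem hzF]
          simp only [Nat.even_iff] at hz hz'
          omega
        · rwa [countBelow_succ_of_notMem hzF]
  have := key (n + 1)
  rw [countBelow_eq_card hF.1 (by omega), countBelow_eq_card hF'.1 (by omega), hF.2.1,
    hF'.2.1] at this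
  omega

theorem countBelow_le_add_one_of_odd_mem {F F' H : Finset ℕ} (hF : EvenBlocks n d F)
    (hF' : EvenBlocks n d F') (h0 : ∀ v ∈ F, v ∉ H → v ≠ 2 → Even (countBelow F v))
    (hH : H ⊆ F') (h2 : 2 ∈ F') (x : ℕ) : countBelow F x ≤ countBelow F' x + 1 := by
  induction x with
  | zero => simp [countBelow_zero]
  | succ z ih =>
    by_cases hzF' : z ∈ F'
    · rw [countBelow_succ_of_mem hzF']
      have := countBelow_succ_le F z
      omega
    · rw [countBelow_succ_of_notMem hzF']
      by_cases hzF : z ∈ F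
      · have hz := h0 z hzF (fun h => hzF' (hH h)) (fun h => hzF' (h ▸ h2))
        have hz' := hF'.2.2 z (hF.1 hzF) hzF'
        rw [countBelow_succ_of_mem hzF]
        simp only [Nat.even_iff] at hz hz'
        omega
      · rwa [countBelow_succ_of_notMem hzF]

/-- If no `d`-set containing `H ∪ {1, 2}` lies in exactly one member of the family, then some
member containing `H ∪ {1, 2}` is minimal: outside `H ∪ {1, 2}` it only has elements which
can be exchanged to the right. -/
theorem exists_minimal (hA : ShiftedEvenFamily n d A) {H F₀ : Finset ℕ} (hF₀ : F₀ ∈ A)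
    (hHF₀ : H ∪ {1, 2} ⊆ F₀) (hH : H ∪ {1, 2} ∉ complexBoundary d (generatedBy A)) :
    ∃ F ∈ A, H ∪ {1, 2} ⊆ F ∧ ∀ v ∈ F, v ∉ H ∪ {1, 2} →
      Even (countBelow F v) ∧ ∃ w, v < w ∧ w ≤ n ∧ w ∉ F := by
  classical
  have hex : ∃ s, ∃ F ∈ A, H ∪ {1, 2} ⊆ F ∧ ∑ x ∈ F, x = s := ⟨_, F₀, hF₀, hHF₀, rfl⟩
  obtain ⟨F, hF, hHF, hs⟩ := Nat.find_spec hex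
  refine ⟨F, hF, hHF, fun v hv hvH => ?_⟩
  have hE := hA.evenBlocks F hF
  have hHe : H ∪ {1, 2} ⊆ F.erase v := Finset.subset_erase.2 ⟨hHF, hvH⟩
  have hne : ∃ F', F' ∈ A ∧ F.erase v ⊆ F' ∧ F' ≠ F := by
    by_contra! h
    refine hH ((mem_complexBoundary_generatedBy hA.card_eq).2
      ⟨F.erase v, hHe, ?_, F, ⟨hF, Finset.erase_subset _ _⟩, fun F' hF' => h F' hF'.1 hF'.2⟩)
    rw [Finset.card_erase_of_mem hv, hE.2.1, Nat.add_sub_cancel]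
  obtain ⟨F', hF', hsub, hneq⟩ := hne
  obtain ⟨w, hwF, rfl⟩ := eq_insert_erase_of_erase_subset hv
    (by rw [hE.2.1, hA.card_eq F' hF']) hneq hsub
  have hE' := hA.evenBlocks _ hF'
  have he : Even (countBelow F v) := by
    by_contra ho
    have hlt := hE.exchange_lt hv hwF hE' ho
    refine Nat.find_min hex (m := ∑ x ∈ insert w (F.erase v), x) ?_
      ⟨_, hF', hHe.trans (Finset.subset_insert _ _), rfl⟩
    rw [← hs, Finset.sum_insert (by simp [hwF])]
    have := Finset.add_sum_erase F (fun x => x) hv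
    omega
  exact ⟨he, w, hE.lt_exchange hv hwF hE' he,
    (Finset.mem_Icc.1 (hE'.1 (Finset.mem_insert_self _ _))).2, hwF⟩

theorem union_mem_boundary (hA : ShiftedEvenFamily n d A) (hn : d + 1 < n) {H : Finset ℕ}
    (h1 : H ∪ {1} ∈ complexBoundary d (generatedBy A))
    (h2 : H ∪ {2} ∈ complexBoundary d (generatedBy A)) :
    H ∪ {1, 2} ∈ complexBoundary d (generatedBy A) := by
  classical
  by_contra hcon
  obtain ⟨G₀, hHG₀, -, F₀, ⟨hF₀, hGF₀⟩, -⟩ :=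
    (mem_complexBoundary_generatedBy hA.card_eq).1 h1
  have h1F₀ : 1 ∈ F₀ := hGF₀ (hHG₀ (by simp))
  have h2F₀ := (hA.evenBlocks F₀ hF₀).two_mem (by omega) h1F₀
  have hHF₀ : H ∪ {1, 2} ⊆ F₀ := by
    intro x hx
    simp only [Finset.mem_union, Finset.mem_insert, Finset.mem_singleton] at hx
    rcases hx with hx | rfl | rfl
    · exact hGF₀ (hHG₀ (by simp [hx]))
    · exact h1F₀
    · exact h2F₀
  obtain ⟨F, hF, hHF, hmin⟩ := hA.exists_minimal hF₀ hHF₀ hcon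
  have hE := hA.evenBlocks F hF
  have h1F : 1 ∈ F := hHF (by simp)
  have h2F : 2 ∈ F := hHF (by simp)
  have heven : ∀ v ∈ F, v ∉ H → v ≠ 2 → Even (countBelow F v) := by
    intro v hv hvH hv2
    by_cases hv1 : v = 1
    · subst hv1
      have h0 : (0 : ℕ) ∉ F := fun h => by simpa using hE.1 h
      rw [countBelow_succ_of_notMem h0, countBelow_zero]
      exact Even.zero
    · exact (hmin v hv (by simp [hvH, hv1, hv2])).1
  have hup : ∀ F', EvenBlocks n d F' → H ⊆ F' → 2 ∈ F' → F' ∈ A := fun F' hF' hHF' h2F' =>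
    hA.up_closed F hF F' hF' (countBelow_le_of_odd_mem hE hF' heven hHF' h2F')
  obtain ⟨G, hHG, hGcard, F', ⟨hF', hGF'⟩, huniq⟩ :=
    (mem_complexBoundary_generatedBy hA.card_eq).1 h2
  have hE' := hA.evenBlocks F' hF'
  have h2G : 2 ∈ G := hHG (by simp)
  have hHG' : H ⊆ G := fun x hx => hHG (by simp [hx])
  obtain ⟨v, hv⟩ : ∃ v, F' \ G = {v} := by
    rw [← Finset.card_eq_one, Finset.card_sdiff_of_subset hGF', hE'.2.1]; omega
  have hvF' : v ∈ F' ∧ v ∉ G := Finset.mem_sdiff.1 (by simp [hv])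
  have hGe : G = F'.erase v := by
    refine Finset.eq_of_subset_of_card_le (Finset.subset_erase.2 ⟨hGF', hvF'.2⟩) ?_
    rw [Finset.card_erase_of_mem hvF'.1, hE'.2.1, hGcard, Nat.add_sub_cancel]
  have hG1 : 1 ∉ G := by
    intro h1G
    refine hcon (complexBoundary_down_closed G ?_ _ ?_)
    · exact (mem_complexBoundary_generatedBy hA.card_eq).2
        ⟨G, subset_rfl, hGcard, F', ⟨hF', hGF'⟩, huniq⟩
    · intro x hx
      simp only [Finset.mem_union, Finset.mem_insert, Finset.mem_singleton] at hx
      rcases hx with hx | rfl | rfl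
      · exact hHG' hx
      · exact h1G
      · exact h2G
  have hnoex : ∀ w, w ∉ F' → ¬ EvenBlocks n d (insert w (F'.erase v)) := by
    intro w hw hEw
    have hmem := hup _ hEw (fun x hx => Finset.mem_insert_of_mem (hGe ▸ hHG' hx))
      (Finset.mem_insert_of_mem (hGe ▸ h2G))
    have := huniq _ ⟨hmem, by rw [hGe]; exact Finset.subset_insert _ _⟩
    exact hw (this ▸ Finset.mem_insert_self _ _)
  have hvn := Finset.mem_Icc.1 (hE'.1 hvF'.1)
  by_cases hve : Even (countBelow F' v)
  · have hterm : ∀ w, v < w → w ≤ n → w ∈ F' := by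
      intro w hvw hwn
      by_contra hwF
      obtain ⟨w', -, hw', hEw'⟩ := hE'.exists_exchange_up hvF'.1 hve ⟨w, hvw, hwn, hwF⟩
      exact hnoex w' hw' hEw'
    have hvH : v ∉ H := fun h => hvF'.2 (hHG' h)
    have hv2 : v ≠ 2 := fun h => hvF'.2 (h ▸ h2G)
    have hvF : Even (countBelow F v) := by
      by_cases hvF : v ∈ F
      · exact heven v hvF hvH hv2
      · exact hE.2.2 v (hE'.1 hvF'.1) hvF
    have hle := countBelow_le_of_odd_mem hE hE' heven (hHG'.trans hGF') (hGF' h2G)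
    have hle' := countBelow_le_add_one_of_odd_mem hE hE' heven (hHG'.trans hGF') (hGF' h2G)
    have heq : countBelow F v = countBelow F' v := by
      have h := hle v
      have h' := hle' v
      simp only [Nat.even_iff] at *
      omega
    have hfull : ∀ k, v + k ≤ n + 1 → countBelow F' (v + k) = countBelow F' v + k := by
      intro k hk
      induction k with
      | zero => rfl
      | succ k ih =>
        have hmem : v + k ∈ F' := by
          by_cases hk0 : k = 0
          · simpa [hk0] using hvF'.1
          · exact hterm _ (by omega) (by omega)
        rw [← add_assoc, countBelow_succ_of_mem hmem, ih (by omega)]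
        omega
    have htot : countBelow F' v + (n + 1 - v) = d + 1 := by
      rw [← hfull (n + 1 - v) (by omega), countBelow_eq_card hE'.1 (by omega), hE'.2.1]
    have hFterm : ∀ w, v ≤ w → w ≤ n → w ∈ F := by
      intro w hvw hwn
      by_contra hwF
      have ha := countBelow_add_le F v (w - v)
      have hb := countBelow_add_le F (w + 1) (n + 1 - (w + 1))
      rw [countBelow_succ_of_notMem hwF, countBelow_eq_card hE.1 (by omega), hE.2.1] at hb
      rw [show v + (w - v) = w by omega] at ha
      omega
    by_cases hv1 : v = 1
    · obtain ⟨g, hg, hgF⟩ := hE.exists_gap hn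
      have := Finset.mem_Icc.1 hg
      exact hgF (hFterm g (by omega) this.2)
    · obtain ⟨-, w, hvw, hwn, hwF⟩ := hmin v (hFterm v le_rfl hvn.2) (by simp [hvH, hv1, hv2])
      exact hwF (hFterm w hvw.le hwn)
  · have h1F' : 1 ∉ F' := by
      intro h1F'
      have hv1 : v = 1 := by
        by_contra hv1
        exact hG1 (hGe ▸ Finset.mem_erase.2 ⟨fun h => hv1 h.symm, h1F'⟩)
      refine hve ?_
      have h0 : (0 : ℕ) ∉ F' := fun h => by simpa using hE'.1 h
      rw [hv1, countBelow_succ_of_notMem h0, countBelow_zero]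
      exact Even.zero
    obtain ⟨w, hw, hEw⟩ := hE'.exists_exchange_down hvF'.1 hve hvn.1 h1F'
    exact hnoex w hw hEw

theorem deletion_card_eq (hA : ShiftedEvenFamily n d A) :
    ∀ F ∈ {F ∈ A | 1 ∉ F}, F.card = d + 1 := fun F hF => hA.card_eq F hF.1

theorem linkCondition (hA : ShiftedEvenFamily n d A) (hn : d + 1 < n) :
    LinkCondition (complexBoundary d (generatedBy A)) 1 2 := by
  ext H
  constructor
  · rintro ⟨⟨h1, h1'⟩, h2, h2'⟩
    refine ⟨?_, hA.union_mem_boundary hn h1' h2'⟩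
    rw [Finset.insert_eq, Finset.disjoint_union_right]
    exact ⟨h1, h2⟩
  · rintro ⟨h, h'⟩
    rw [Finset.insert_eq, Finset.disjoint_union_right] at h
    refine ⟨⟨h.1, ?_⟩, h.2, ?_⟩ <;>
    · refine complexBoundary_down_closed _ h' _ (Finset.union_subset_union_right ?_)
      simp

theorem erase_two_mem_boundary (hA : ShiftedEvenFamily n d A) (hn : d + 1 < n)
    {F : Finset ℕ} (hF : F ∈ A) (h1 : 1 ∈ F) :
    F.erase 2 ∈ complexBoundary d (generatedBy A) := by
  have h2 := (hA.evenBlocks F hF).two_mem (by omega) h1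
  refine (mem_complexBoundary_generatedBy hA.card_eq).2
    ⟨F.erase 2, subset_rfl, ?_, F, ⟨hF, Finset.erase_subset _ _⟩, ?_⟩
  · rw [Finset.card_erase_of_mem h2, hA.card_eq F hF, Nat.add_sub_cancel]
  · rintro F' ⟨hF', hsub⟩
    have h2' := (hA.evenBlocks F' hF').two_mem (by omega) (hsub (by simp [h1]))
    refine (Finset.eq_of_subset_of_card_le ?_ ?_).symm
    · rw [← Finset.insert_erase h2]
      exact Finset.insert_subset h2' hsub
    · rw [hA.card_eq F hF, hA.card_eq F' hF']

theorem erase_one_mem_boundary_deletion (hA : ShiftedEvenFamily n d A) (hn : d + 1 < n)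
    {F : Finset ℕ} (hF : F ∈ A) (h1 : 1 ∈ F) :
    F.erase 1 ∈ complexBoundary d (generatedBy {F ∈ A | 1 ∉ F}) := by
  refine (mem_complexBoundary_generatedBy hA.deletion_card_eq).2
    ⟨F.erase 1, subset_rfl, ?_, hA.existsUnique_exchange_one hn hF h1⟩
  rw [Finset.card_erase_of_mem h1, hA.card_eq F hF, Nat.add_sub_cancel]

theorem contraction_eq (hA : ShiftedEvenFamily n d A) (hn : d + 1 < n) :
    contraction (complexBoundary d (generatedBy A)) 1 2 =
      complexBoundary d (generatedBy {F ∈ A | 1 ∉ F}) := by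
  ext X
  constructor
  · rintro (⟨hX, h1X⟩ | ⟨Y, hY, h1Y, rfl⟩)
    · obtain ⟨G, hXG, hG, F, ⟨hF, hGF⟩, huniq⟩ :=
        (mem_complexBoundary_generatedBy hA.card_eq).1 hX
      by_cases h1F : 1 ∈ F
      · exact complexBoundary_down_closed _ (hA.erase_one_mem_boundary_deletion hn hF h1F) _
          (Finset.subset_erase.2 ⟨hXG.trans hGF, h1X⟩)
      · exact (mem_complexBoundary_generatedBy hA.deletion_card_eq).2
          ⟨G, hXG, hG, F, ⟨⟨hF, h1F⟩, hGF⟩, fun F' hF' => huniq F' ⟨hF'.1.1, hF'.2⟩⟩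
    · obtain ⟨G, hYG, hG, F, ⟨hF, hGF⟩, -⟩ :=
        (mem_complexBoundary_generatedBy hA.card_eq).1 hY
      have h1F : 1 ∈ F := hGF (hYG h1Y)
      have h2F := (hA.evenBlocks F hF).two_mem (by omega) h1F
      refine complexBoundary_down_closed _ (hA.erase_one_mem_boundary_deletion hn hF h1F) _ ?_
      refine Finset.union_subset (Finset.erase_subset_erase _ (hYG.trans hGF)) ?_
      simp [h2F]
  · intro hX
    obtain ⟨G, hXG, hG, F, ⟨⟨hF, h1F⟩, hGF⟩, huniq⟩ :=
      (mem_complexBoundary_generatedBy hA.deletion_card_eq).1 hX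
    have h1G : 1 ∉ G := fun h => h1F (hGF h)
    have h1X : 1 ∉ X := fun h => h1G (hXG h)
    by_cases hex : ∃ F' ∈ A, 1 ∈ F' ∧ G ⊆ F'
    · obtain ⟨F', hF', h1F', hGF'⟩ := hex
      have hbd := hA.erase_two_mem_boundary hn hF' h1F'
      by_cases h2X : 2 ∈ X
      · refine Or.inr ⟨insert 1 (X.erase 2), complexBoundary_down_closed _ hbd _ ?_, by simp, ?_⟩
        · refine Finset.insert_subset (by simp [h1F']) ?_
          exact Finset.erase_subset_erase _ (hXG.trans hGF')
        · ext x
          by_cases hx : x = 2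
          · simp [hx, h2X]
          · by_cases hx1 : x = 1 <;> simp [hx, hx1, h1X]
      · exact Or.inl ⟨complexBoundary_down_closed _ hbd _
          (Finset.subset_erase.2 ⟨hXG.trans hGF', h2X⟩), h1X⟩
    · push Not at hex
      refine Or.inl ⟨(mem_complexBoundary_generatedBy hA.card_eq).2
        ⟨G, hXG, hG, F, ⟨hF, hGF⟩, fun F' hF' => ?_⟩, h1X⟩
      exact huniq F' ⟨⟨hF'.1, fun h1 => hex F' hF'.1 h1 hF'.2⟩, hF'.2⟩

theorem linkOf_eq (hA : ShiftedEvenFamily n d A) (hd : 1 < d) (hn : d + 1 < n) :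
    linkOf (complexBoundary d (generatedBy A)) {1, 2} =
      complexBoundary (d - 2) (generatedBy ((fun F => F \ {1, 2}) '' {F ∈ A | 1 ∈ F})) := by
  have h12 : ∀ F ∈ A, 1 ∈ F → ({1, 2} : Finset ℕ) ⊆ F := by
    intro F hF h1
    have := (hA.evenBlocks F hF).two_mem (by omega) h1
    intro x hx
    simp only [Finset.mem_insert, Finset.mem_singleton] at hx
    rcases hx with rfl | rfl <;> assumption
  have hcard : ∀ F ∈ (fun F => F \ {1, 2}) '' {F ∈ A | 1 ∈ F}, F.card = (d - 2) + 1 := by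
    rintro _ ⟨F, ⟨hF, h1⟩, rfl⟩
    simp only
    rw [Finset.card_sdiff_of_subset (h12 F hF h1), hA.card_eq F hF,
      Finset.card_pair (by decide)]
    omega
  ext X
  rw [mem_complexBoundary_generatedBy hcard]
  constructor
  · rintro ⟨hdis, hX⟩
    obtain ⟨G, hXG, hG, F, ⟨hF, hGF⟩, huniq⟩ :=
      (mem_complexBoundary_generatedBy hA.card_eq).1 hX
    have h12G : ({1, 2} : Finset ℕ) ⊆ G := Finset.subset_union_right.trans hXG
    have h1F : 1 ∈ F := hGF (h12G (by simp))
    refine ⟨G \ {1, 2}, Finset.subset_sdiff.2 ⟨Finset.subset_union_left.trans hXG, hdis⟩, ?_,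
      F \ {1, 2}, ⟨⟨F, ⟨hF, h1F⟩, rfl⟩, Finset.sdiff_subset_sdiff hGF subset_rfl⟩, ?_⟩
    · rw [Finset.card_sdiff_of_subset h12G, hG, Finset.card_pair (by decide)]
    · rintro _ ⟨⟨F', ⟨hF', h1F'⟩, rfl⟩, hsub⟩
      simp only at hsub ⊢
      rw [huniq F' ⟨hF', ?_⟩]
      rw [← Finset.sdiff_union_of_subset h12G]
      exact Finset.union_subset (hsub.trans Finset.sdiff_subset) (h12 F' hF' h1F')
  · rintro ⟨G, hXG, hG, _, ⟨⟨F, ⟨hF, h1F⟩, rfl⟩, hGF⟩, huniq⟩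
    simp only at hGF huniq
    have hGdis := (Finset.subset_sdiff.1 hGF).2
    refine ⟨Finset.disjoint_of_subset_left hXG hGdis,
      (mem_complexBoundary_generatedBy hA.card_eq).2 ⟨G ∪ {1, 2},
        Finset.union_subset_union_left hXG, ?_, F, ⟨hF, Finset.union_subset
          (hGF.trans Finset.sdiff_subset) (h12 F hF h1F)⟩, ?_⟩⟩
    · rw [Finset.card_union_of_disjoint hGdis, hG, Finset.card_pair (by decide)]
      omega
    · rintro F' ⟨hF', hsub⟩
      have h1F' : 1 ∈ F' := hsub (by simp)
      have := huniq (F' \ {1, 2}) ⟨⟨F', ⟨hF', h1F'⟩, rfl⟩,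
        Finset.subset_sdiff.2 ⟨Finset.subset_union_left.trans hsub, hGdis⟩⟩
      rw [← Finset.sdiff_union_of_subset (h12 F' hF' h1F'), this,
        Finset.sdiff_union_of_subset (h12 F hF h1F)]

end ShiftedEvenFamily

/-! ### Shifting, contraction and links -/

theorem shiftComplex_eq_of_linkCondition {Γ : Set (Finset ℕ)} {i j : ℕ} (hij : i ≠ j)
    (hΓ : ∀ F ∈ Γ, ∀ G, G ⊆ F → G ∈ Γ) (hl : LinkCondition Γ i j) :
    shiftComplex Γ i j = contraction Γ i j ∪
      {H | ∃ F ∈ joinW {j} (linkOf Γ {i, j}), H = insert i F} := by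
  classical
  have hlink : ∀ F ∈ Γ, i ∈ F → j ∉ F → F.erase i ∪ {j} ∈ Γ → insert j F ∈ Γ := by
    intro F hF hi hj hFj
    have h : F.erase i ∈ linkOf Γ {i} ∩ linkOf Γ {j} := by
      refine ⟨⟨by simp, ?_⟩, by simp [hj], hFj⟩
      rwa [Finset.union_comm, ← Finset.insert_eq, Finset.insert_erase hi]
    rw [hl] at h
    have h2 := h.2
    have : F.erase i ∪ {i, j} = insert j F := by
      ext x; by_cases hx : x = i <;> simp [hx, hi]
    rwa [this] at h2
  ext H
  constructor
  · rintro ⟨F, hF, rfl⟩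
    unfold shiftMap
    split_ifs with h
    · exact Or.inl (Or.inr ⟨F, hF, h.1, rfl⟩)
    · by_cases hi : i ∈ F
      · right
        have hjF : insert j F ∈ Γ := by
          by_cases hj : j ∈ F
          · rwa [Finset.insert_eq_of_mem hj]
          · refine hlink F hF hi hj ?_
            by_contra h'
            exact h ⟨hi, hj, h'⟩
        refine ⟨F.erase i, ?_, (Finset.insert_erase hi).symm⟩
        refine ⟨F ∩ {j}, Finset.inter_subset_right, (F.erase i).erase j, ⟨by simp, ?_⟩, ?_⟩
        · convert hjF using 1
          ext x; by_cases hx : x = i <;> by_cases hx' : x = j <;> simp [hx, hx', hi]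
        · ext x; by_cases hx : x = i <;> by_cases hx' : x = j <;> simp_all
      · exact Or.inl (Or.inl ⟨hF, hi⟩)
  · rintro ((⟨hH, hi⟩ | ⟨F, hF, hi, rfl⟩) | ⟨_, ⟨W, hW, G, ⟨hGd, hG⟩, rfl⟩, rfl⟩)
    · exact ⟨H, hH, by simp [shiftMap, hi]⟩
    · by_cases h : F.erase i ∪ {j} ∈ Γ
      · exact ⟨_, h, by simp [shiftMap, hij]⟩
      · refine ⟨F, hF, if_pos ⟨hi, fun hj => h (hΓ F hF _ ?_), h⟩⟩
        exact Finset.union_subset (Finset.erase_subset _ _) (by simpa using hj)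
    · have hGi : i ∉ G := fun h => by
        simpa using Finset.disjoint_left.1 hGd h
      have hsub : insert i (W ∪ G) ⊆ G ∪ {i, j} := by
        intro x hx
        simp only [Finset.mem_insert, Finset.mem_union, Finset.mem_singleton] at hx ⊢
        rcases hx with hx | hx | hx
        · simp [hx]
        · have := hW hx
          simp only [Finset.mem_singleton] at this
          simp [this]
        · simp [hx]
      refine ⟨_, hΓ _ hG _ hsub, if_neg ?_⟩
      rintro ⟨-, -, h⟩
      refine h (hΓ _ hG _ ?_)
      intro x hx
      simp only [Finset.mem_union, Finset.mem_erase, Finset.mem_singleton] at hx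
      rcases hx with hx | hx
      · exact hsub hx.2
      · simp [hx]

/-! ### The facets of squeezed balls -/

theorem countBelow_of_pairs {P : ℕ → ℕ} (hP : ∀ j, P j + 2 ≤ P (j + 1)) {F : Finset ℕ} {N : ℕ}
    (hF : ∀ x < N, x ∈ F ↔ ∃ j, x = P j ∨ x = P j + 1) {x : ℕ} (hx : x ≤ N) :
    ∃ j, (countBelow F x = 2 * j ∧ x ≤ P j ∧ ∀ i < j, P i + 1 < x) ∨
      (countBelow F x = 2 * j + 1 ∧ x = P j + 1) := by
  have hmono : StrictMono P := strictMono_nat_of_lt_succ fun j => by have := hP j; omega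
  induction x with
  | zero => exact ⟨0, Or.inl ⟨countBelow_zero F, by omega, by omega⟩⟩
  | succ x ih =>
    obtain ⟨j, ⟨hc, hle, hlt⟩ | ⟨hc, rfl⟩⟩ := ih (by omega)
    · by_cases hxj : x = P j
      · refine ⟨j, Or.inr ⟨?_, by omega⟩⟩
        rw [countBelow_succ_of_mem ((hF x (by omega)).2 ⟨j, Or.inl hxj⟩), hc]
      · refine ⟨j, Or.inl ⟨?_, by omega, fun i hi => by have := hlt i hi; omega⟩⟩
        rw [countBelow_succ_of_notMem, hc]
        rw [hF x (by omega)]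
        rintro ⟨i, hi⟩
        rcases lt_or_ge i j with hij | hij
        · have := hlt i hij
          omega
        · have := hmono.monotone hij
          omega
    · refine ⟨j + 1, Or.inl ⟨?_, by have := hP j; omega, fun i hi => ?_⟩⟩
      · rw [countBelow_succ_of_mem ((hF _ (by omega)).2 ⟨j, Or.inr rfl⟩), hc]
        omega
      · have := hmono.monotone (show i ≤ j by omega)
        omega

/-- The smaller element of the `j`-th pair of `F_d(u)`, where the final interval is also cut
into pairs. -/
def pairStart (n d : ℕ) (u : Multiset ℕ) (j : ℕ) : ℕ :=
  (u.sort (· ≤ ·)).getD j (n - d) + 2 * j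

section Facets

variable {n d : ℕ} {u : Multiset ℕ}

theorem pairStart_of_lt {j : ℕ} (hj : j < (u.sort (· ≤ ·)).length) :
    pairStart n d u j = (u.sort (· ≤ ·))[j] + 2 * j := by
  rw [pairStart, List.getD_eq_getElem _ _ hj]

theorem pairStart_of_ge {j : ℕ} (hj : (u.sort (· ≤ ·)).length ≤ j) :
    pairStart n d u j = n - d + 2 * j := by
  rw [pairStart, List.getD_eq_default _ _ hj]

theorem sort_getElem_mem_Icc (hu : ∀ i ∈ u, i ∈ Finset.Icc 1 (n - d - 1)) {j : ℕ}
    (hj : j < (u.sort (· ≤ ·)).length) :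
    1 ≤ (u.sort (· ≤ ·))[j] ∧ (u.sort (· ≤ ·))[j] ≤ n - d - 1 :=
  Finset.mem_Icc.1 (hu _ ((Multiset.mem_sort (r := (· ≤ ·))).1 (List.getElem_mem hj)))

theorem pairStart_add_two_le (hu : ∀ i ∈ u, i ∈ Finset.Icc 1 (n - d - 1)) (j : ℕ) :
    pairStart n d u j + 2 ≤ pairStart n d u (j + 1) := by
  rcases lt_or_ge (j + 1) (u.sort (· ≤ ·)).length with h | h
  · rw [pairStart_of_lt h, pairStart_of_lt (by omega)]
    have := List.pairwise_iff_getElem.1 (Multiset.pairwise_sort u (· ≤ ·)) j (j + 1)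
      (by omega) h (by omega)
    omega
  · rw [pairStart_of_ge h]
    rcases lt_or_ge j (u.sort (· ≤ ·)).length with h' | h'
    · rw [pairStart_of_lt h']
      have := sort_getElem_mem_Icc hu h'
      omega
    · rw [pairStart_of_ge h']
      omega

theorem one_le_pairStart (hn : d + 1 < n) (hu : ∀ i ∈ u, i ∈ Finset.Icc 1 (n - d - 1))
    (j : ℕ) : 1 ≤ pairStart n d u j := by
  rcases lt_or_ge j (u.sort (· ≤ ·)).length with h' | h'
  · rw [pairStart_of_lt h']
    have := sort_getElem_mem_Icc hu h'
    omega
  · rw [pairStart_of_ge h']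
    omega

theorem mem_Fd (hn : d + 1 < n) (hu : ∀ i ∈ u, i ∈ Finset.Icc 1 (n - d - 1))
    (hdeg : 2 * Multiset.card u ≤ d + 1) {x : ℕ} :
    x ∈ Fd n d u ↔ x ≤ n ∧ ∃ j, x = pairStart n d u j ∨ x = pairStart n d u j + 1 := by
  have hlen : (u.sort (· ≤ ·)).length = Multiset.card u := Multiset.length_sort _
  simp only [Fd, Finset.mem_union, Finset.mem_biUnion, Finset.mem_range, Finset.mem_insert,
    Finset.mem_singleton, Finset.mem_Icc]
  constructor
  · rintro (⟨j, hj, h⟩ | h)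
    · rw [← hlen] at hj
      have hb := sort_getElem_mem_Icc hu hj
      rw [List.getD_eq_getElem _ _ hj] at h
      refine ⟨by omega, j, ?_⟩
      rwa [pairStart_of_lt hj]
    · refine ⟨h.2, (x - (n - d)) / 2, ?_⟩
      rw [pairStart_of_ge (by omega)]
      omega
  · rintro ⟨hxn, j, h⟩
    rcases lt_or_ge j (u.sort (· ≤ ·)).length with hj | hj
    · refine Or.inl ⟨j, by omega, ?_⟩
      rwa [List.getD_eq_getElem _ _ hj, ← pairStart_of_lt (n := n) (d := d) hj]
    · rw [pairStart_of_ge hj] at h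
      exact Or.inr ⟨by omega, hxn⟩

theorem exists_countBelow_Fd (hn : d + 1 < n) (hu : ∀ i ∈ u, i ∈ Finset.Icc 1 (n - d - 1))
    (hdeg : 2 * Multiset.card u ≤ d + 1) {x : ℕ} (hx : x ≤ n + 1) :
    ∃ j, (countBelow (Fd n d u) x = 2 * j ∧ x ≤ pairStart n d u j ∧
        ∀ i < j, pairStart n d u i + 1 < x) ∨
      (countBelow (Fd n d u) x = 2 * j + 1 ∧ x = pairStart n d u j + 1) := by
  refine countBelow_of_pairs (pairStart_add_two_le hu) (fun y hy => ?_) hx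
  rw [mem_Fd hn hu hdeg]
  exact and_iff_right (by omega)

theorem strictMono_pairStart (hu : ∀ i ∈ u, i ∈ Finset.Icc 1 (n - d - 1)) :
    StrictMono (pairStart n d u) :=
  strictMono_nat_of_lt_succ fun j => by have := pairStart_add_two_le hu j; omega

theorem evenBlocks_Fd (hn : d + 1 < n) (hu : ∀ i ∈ u, i ∈ Finset.Icc 1 (n - d - 1))
    (hdeg : 2 * Multiset.card u ≤ d + 1) : EvenBlocks n d (Fd n d u) := by
  have hlen : (u.sort (· ≤ ·)).length = Multiset.card u := Multiset.length_sort _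
  have hsub : Fd n d u ⊆ Finset.Icc 1 n := by
    intro x hx
    obtain ⟨hxn, j, h⟩ := (mem_Fd hn hu hdeg).1 hx
    have := one_le_pairStart hn hu j
    exact Finset.mem_Icc.2 ⟨by omega, hxn⟩
  refine ⟨hsub, ?_, ?_⟩
  · rw [← countBelow_eq_card hsub (show n < n + 1 by omega)]
    have hmono := strictMono_pairStart hu
    obtain ⟨j, ⟨hc, hle, hlt⟩ | ⟨hc, hj⟩⟩ := exists_countBelow_Fd hn hu hdeg (le_refl (n + 1))
    · have hs := pairStart_of_ge (n := n) (d := d) (u := u) (j := (d + 1) / 2) (by omega)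
      rcases lt_trichotomy j ((d + 1) / 2) with h | h | h
      · have := pairStart_add_two_le hu j
        have := hmono.monotone (show j + 1 ≤ (d + 1) / 2 by omega)
        omega
      · subst h
        omega
      · have := hlt _ h
        omega
    · have hs := pairStart_of_ge (n := n) (d := d) (u := u) (j := (d + 1) / 2) (by omega)
      rcases lt_trichotomy j ((d + 1) / 2) with h | h | h
      · have := pairStart_add_two_le hu j
        have := hmono.monotone (show j + 1 ≤ (d + 1) / 2 by omega)
        omega
      · subst h
        omega
      · have := pairStart_add_two_le hu ((d + 1) / 2)
        have := hmono.monotone (show (d + 1) / 2 + 1 ≤ j by omega)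
        omega
  · intro x hx hxF
    obtain ⟨j, ⟨hc, -⟩ | ⟨-, hj⟩⟩ :=
      exists_countBelow_Fd hn hu hdeg (x := x) (by have := (Finset.mem_Icc.1 hx).2; omega)
    · exact hc ▸ even_two_mul j
    · exact absurd ((mem_Fd hn hu hdeg).2 ⟨(Finset.mem_Icc.1 hx).2, j, Or.inr hj⟩) hxF

theorem one_mem_Fd_iff (hn : d + 1 < n) (hu : ∀ i ∈ u, i ∈ Finset.Icc 1 (n - d - 1))
    (hdeg : 2 * Multiset.card u ≤ d + 1) : 1 ∈ Fd n d u ↔ 1 ∈ u := by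
  rw [mem_Fd hn hu hdeg]
  constructor
  · rintro ⟨-, j, h⟩
    have hpos := one_le_pairStart hn hu j
    rcases lt_or_ge j (u.sort (· ≤ ·)).length with hj | hj
    · have hb := sort_getElem_mem_Icc hu hj
      rw [pairStart_of_lt hj] at h
      rw [← Multiset.mem_sort (r := (· ≤ ·)), show (1 : ℕ) = (u.sort (· ≤ ·))[j] by omega]
      exact List.getElem_mem hj
    · rw [pairStart_of_ge hj] at h
      omega
  · intro h
    obtain ⟨j, hj, hj1⟩ := List.getElem_of_mem ((Multiset.mem_sort (r := (· ≤ ·))).2 h)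
    refine ⟨by omega, 0, Or.inl ?_⟩
    have h0 : 0 < (u.sort (· ≤ ·)).length := by omega
    have hb := sort_getElem_mem_Icc hu h0
    rw [pairStart_of_lt h0]
    rcases Nat.eq_zero_or_pos j with rfl | hjpos
    · omega
    · have := List.pairwise_iff_getElem.1 (Multiset.pairwise_sort u (· ≤ ·)) 0 j h0 hj hjpos
      omega

/-- Replacing variables of a monomial in a shifted order ideal by later ones stays inside. -/
theorem IsShiftedOrderIdeal.mem_of_forall₂_le {m : ℕ} {U : Set (Multiset ℕ)}
    (hU : IsShiftedOrderIdeal m U) {l l' : List ℕ} (h : List.Forall₂ (· ≤ ·) l l')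
    (hl' : ∀ i ∈ l', i ≤ m) {s : Multiset ℕ} (hl : (l : Multiset ℕ) + s ∈ U) :
    (l' : Multiset ℕ) + s ∈ U := by
  induction h generalizing s with
  | nil => exact hl
  | @cons a b l l' hab h ih =>
    have hb : (b ::ₘ ((l : Multiset ℕ) + s)) ∈ U := by
      rw [← Multiset.cons_coe, Multiset.cons_add] at hl
      rcases hab.eq_or_lt with rfl | hlt
      · exact hl
      · exact hU.2.2.2.2 _ a b hlt (hl' b (by simp)) hl
    rw [← Multiset.cons_coe, Multiset.cons_add, ← Multiset.add_cons]
    exact ih (fun i hi => hl' i (by simp [hi])) (by rwa [Multiset.add_cons])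

end Facets

theorem exists_Fd_eq_of_countBelow_le {n d : ℕ} (hn : d + 1 < n) {U : Set (Multiset ℕ)}
    (hU : IsShiftedOrderIdeal (n - d - 1) U) (hdeg : ∀ u ∈ U, 2 * Multiset.card u ≤ d + 1)
    {u : Multiset ℕ} (hu : u ∈ U) {F : Finset ℕ} (hF : EvenBlocks n d F)
    (hle : ∀ x, countBelow F x ≤ countBelow (Fd n d u) x) : ∃ u' ∈ U, Fd n d u' = F := by
  classical
  have huI := hU.1 u hu
  have hmono := strictMono_pairStart huI
  have hex : ∀ i, ∃ x, i < d + 1 → x ∈ F ∧ countBelow F x = i := by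
    intro i
    by_cases hi : i < d + 1
    · obtain ⟨x, hx⟩ := exists_mem_countBelow_eq hF.1 (hF.2.1.symm ▸ hi)
      exact ⟨x, fun _ => hx⟩
    · exact ⟨0, fun h => absurd h hi⟩
  choose g hg using hex
  have hglt : ∀ {i j}, i < j → j < d + 1 → g i + (j - i) ≤ g j := by
    intro i j hij hj
    have hi := hg i (by omega)
    have hj := hg j hj
    by_contra hlt
    rcases le_total (g i) (g j) with h | h
    · have := countBelow_add_le F (g i) (g j - g i)
      rw [Nat.add_sub_cancel' h] at this
      omega
    · have := countBelow_mono F h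
      omega
  have hgI : ∀ {i}, i < d + 1 → i + 1 ≤ g i ∧ g i ≤ n := by
    intro i hi
    have h0 := Finset.mem_Icc.1 (hF.1 (hg 0 (by omega)).1)
    have h1 := Finset.mem_Icc.1 (hF.1 (hg i hi).1)
    rcases Nat.eq_zero_or_pos i with rfl | hpos
    · omega
    · have := hglt hpos hi
      omega
  have htotal : countBelow F (n + 1) = d + 1 := by
    rw [countBelow_eq_card hF.1 (Nat.lt_succ_self n), hF.2.1]
  have hbound : ∃ j, d + 1 ≤ 2 * j ∨ n - d - 1 + 2 * j < g (2 * j) := ⟨d + 1, Or.inl (by omega)⟩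
  have hkmin := fun j => Nat.find_min hbound (m := j)
  have hkspec := Nat.find_spec hbound
  generalize Nat.find hbound = k at hkmin hkspec
  have hk : 2 * k ≤ d + 1 := by
    by_contra hk
    have hlast := hkmin (k - 1) (by omega)
    have h2 : 2 * (k - 1) = d := by omega
    rw [h2] at hlast
    have hgd := hg d (by omega)
    have hnF : n ∉ F := by
      intro hnF
      have h3 := countBelow_mono F (show g d + 1 ≤ n by omega)
      rw [countBelow_succ_of_mem hgd.1, hgd.2] at h3
      rw [countBelow_succ_of_mem hnF] at htotal
      omega
    have h4 := hF.2.2 n (by simp; omega) hnF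
    rw [countBelow_succ_of_notMem hnF] at htotal
    rw [htotal, Nat.even_iff] at h4
    omega
  set l' : List ℕ := (List.range k).map fun j => g (2 * j) - 2 * j with hl'
  have hlen' : l'.length = k := by simp [hl']
  have hget' : ∀ j (hj : j < l'.length), l'[j] = g (2 * j) - 2 * j := by
    intro j hj
    simp [hl']
  have hsort : (l' : Multiset ℕ).sort (· ≤ ·) = l' := by
    refine List.Perm.eq_of_pairwise (le := (· ≤ ·)) (fun a b _ _ h h' => le_antisymm h h')
      (Multiset.pairwise_sort _ _) ?_ (Multiset.coe_eq_coe.1 (Multiset.sort_eq _ _))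
    rw [List.pairwise_iff_getElem]
    intro i j hi hj hij
    rw [hget', hget']
    have := hglt (show 2 * i < 2 * j by omega) (by omega)
    omega
  have hl'I : ∀ i ∈ l', i ∈ Finset.Icc 1 (n - d - 1) := by
    intro i hi
    obtain ⟨j, hj, rfl⟩ := List.getElem_of_mem hi
    rw [hget']
    have h1 := hkmin j (by omega)
    have h2 := hgI (show 2 * j < d + 1 by omega)
    exact Finset.mem_Icc.2 ⟨by omega, by omega⟩
  have hstart : ∀ j < k, pairStart n d u j ≤ g (2 * j) := by
    intro j hj
    by_contra! hlt
    have h2 := hg (2 * j) (by omega)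
    have h3 := hgI (show 2 * j < d + 1 by omega)
    have h4 := hle (g (2 * j) + 1)
    rw [countBelow_succ_of_mem h2.1, h2.2] at h4
    obtain ⟨i, ⟨hc, -, hi⟩ | ⟨hc, hi⟩⟩ :=
      exists_countBelow_Fd hn huI (hdeg u hu) (show g (2 * j) + 1 ≤ n + 1 by omega)
    · have := hi j (by omega)
      omega
    · have := hmono.monotone (show j ≤ i by omega)
      omega
  have hlt : ∀ j < k, j < (u.sort (· ≤ ·)).length := by
    intro j hj
    by_contra! h
    have h1 := hstart j hj
    have h2 := hkmin j hj
    rw [pairStart_of_ge h] at h1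
    omega
  have hU' : (l' : Multiset ℕ) ∈ U := by
    have hk' : k ≤ (u.sort (· ≤ ·)).length := by
      rcases Nat.eq_zero_or_pos k with h | h
      · omega
      · have := hlt (k - 1) (by omega)
        omega
    have htake : (((u.sort (· ≤ ·)).take k : List ℕ) : Multiset ℕ) ∈ U := by
      refine hU.2.2.2.1 u hu _ ?_
      conv_rhs => rw [← Multiset.sort_eq u (· ≤ ·)]
      exact Multiset.coe_le.2 (List.take_sublist _ _).subperm
    have h := hU.mem_of_forall₂_le (l := (u.sort (· ≤ ·)).take k) (l' := l') (s := 0) ?_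
      (fun i hi => (Finset.mem_Icc.1 (hl'I i hi)).2) (by simpa using htake)
    · simpa using h
    · rw [List.forall₂_iff_get]
      refine ⟨by rw [hlen', List.length_take]; omega, fun i h₁ h₂ => ?_⟩
      have hik : i < k := by omega
      have h := hstart i hik
      rw [pairStart_of_lt (hlt i hik)] at h
      simp only [List.get_eq_getElem, List.getElem_take, hget']
      omega
  refine ⟨l', hU', Finset.eq_of_subset_of_card_le (fun x hx => ?_) ?_⟩
  · obtain ⟨hxn, j, hj⟩ := (mem_Fd hn hl'I (hdeg _ hU')).1 hx
    rcases lt_or_ge j k with hjk | hjk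
    · have hs : pairStart n d (l' : Multiset ℕ) j = g (2 * j) := by
        have h3 := hgI (show 2 * j < d + 1 by omega)
        simp only [pairStart, hsort]
        rw [List.getD_eq_getElem _ _ (by omega), hget']
        omega
      rw [hs] at hj
      have hgj := hg (2 * j) (by omega)
      rcases hj with rfl | rfl
      · exact hgj.1
      · by_contra hxF
        have h5 := hF.2.2 _ (Finset.mem_Icc.2 ⟨by omega, hxn⟩) hxF
        rw [countBelow_succ_of_mem hgj.1, hgj.2, Nat.even_iff] at h5
        omega
    · have hs : pairStart n d (l' : Multiset ℕ) j = n - d + 2 * j := by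
        apply pairStart_of_ge
        rw [hsort]
        omega
      rw [hs] at hj
      by_contra hxF
      have hgk := hg (2 * k) (by omega)
      have h6 := countBelow_mono F (show n - d + 2 * k ≤ g (2 * k) by omega)
      have h7 := countBelow_add_le F (n - d + 2 * k) (x - (n - d + 2 * k))
      have h8 := countBelow_add_le F (x + 1) (n + 1 - (x + 1))
      rw [Nat.add_sub_cancel' (by omega)] at h7 h8
      rw [countBelow_succ_of_notMem hxF] at h8
      omega
  · rw [hF.2.1, (evenBlocks_Fd hn hl'I (hdeg _ hU')).2.1]

theorem shiftedEvenFamily_Fd {n d : ℕ} (hn : d + 1 < n) {U : Set (Multiset ℕ)}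
    (hU : IsShiftedOrderIdeal (n - d - 1) U) (hdeg : ∀ u ∈ U, 2 * Multiset.card u ≤ d + 1) :
    ShiftedEvenFamily n d (Fd n d '' U) where
  evenBlocks := by
    rintro _ ⟨u, hu, rfl⟩
    exact evenBlocks_Fd hn (hU.1 u hu) (hdeg u hu)
  up_closed := by
    rintro _ ⟨u, hu, rfl⟩ F' hF' hle
    exact exists_Fd_eq_of_countBelow_le hn hU hdeg hu hF' hle

theorem squeezedBall_eq_generatedBy (n d : ℕ) (U : Set (Multiset ℕ)) :
    squeezedBall n d U = generatedBy (Fd n d '' U) := by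
  simp only [squeezedBall, generatedBy, Set.exists_mem_image]

/-- Lemma 5.2 / `5no2`. With `Û = U ∩ K[x_2,…,x_m]` and
`Ũ = {u : x_1 u ∈ U}`, one has
`Shift_{12}(S_d(U)) = S_d(Û) ∪ { {1} ∪ F : F ∈ {2} * S̃_{d-2}(Ũ) }`; in particular
`S_d(U)` satisfies the Link condition w.r.t. `{1,2}`, `C_{S_d(U)}({1,2}) = S_d(Û)` and
`lk_{S_d(U)}({1,2}) = S̃_{d-2}(Ũ)`. -/
theorem stmt15 (n d : ℕ) (hd : 2 < d) (hn : d + 1 < n) (U : Set (Multiset ℕ))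
    (hU : IsShiftedOrderIdeal (n - d - 1) U)
    (hdeg : ∀ u ∈ U, 2 * Multiset.card u ≤ d + 1) :
    shiftComplex (squeezedSphere n d U) 1 2 =
        squeezedSphere n d {u ∈ U | (1 : ℕ) ∉ u} ∪
          {H | ∃ F ∈ joinW {2}
              (complexBoundary (d - 2)
                {G | ∃ u ∈ {u : Multiset ℕ | (1 ::ₘ u) ∈ U}, G ⊆ Fd n d (1 ::ₘ u) \ {1, 2}}),
            H = insert 1 F} ∧
    LinkCondition (squeezedSphere n d U) 1 2 ∧
    contraction (squeezedSphere n d U) 1 2 = squeezedSphere n d {u ∈ U | (1 : ℕ) ∉ u} ∧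
    linkOf (squeezedSphere n d U) {1, 2} =
      complexBoundary (d - 2)
        {G | ∃ u ∈ {u : Multiset ℕ | (1 ::ₘ u) ∈ U}, G ⊆ Fd n d (1 ::ₘ u) \ {1, 2}} := by
  have hA := shiftedEvenFamily_Fd hn hU hdeg
  have hhat : Fd n d '' {u ∈ U | (1 : ℕ) ∉ u} = {F ∈ Fd n d '' U | 1 ∉ F} := by
    ext F
    constructor
    · rintro ⟨u, ⟨hu, h1⟩, rfl⟩
      exact ⟨⟨u, hu, rfl⟩, by rwa [one_mem_Fd_iff hn (hU.1 u hu) (hdeg u hu)]⟩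
    · rintro ⟨⟨u, hu, rfl⟩, h1⟩
      exact ⟨u, ⟨hu, by rwa [one_mem_Fd_iff hn (hU.1 u hu) (hdeg u hu)] at h1⟩, rfl⟩
  have htilde : {G | ∃ u ∈ {u : Multiset ℕ | (1 ::ₘ u) ∈ U}, G ⊆ Fd n d (1 ::ₘ u) \ {1, 2}} =
      generatedBy ((fun F => F \ {1, 2}) '' {F ∈ Fd n d '' U | 1 ∈ F}) := by
    ext G
    constructor
    · rintro ⟨u, hu, hG⟩
      refine ⟨_, ⟨_, ⟨⟨_, hu, rfl⟩, ?_⟩, rfl⟩, hG⟩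
      rw [one_mem_Fd_iff hn (hU.1 _ hu) (hdeg _ hu)]
      exact Multiset.mem_cons_self 1 u
    · rintro ⟨_, ⟨_, ⟨⟨u, hu, rfl⟩, h1⟩, rfl⟩, hG⟩
      rw [one_mem_Fd_iff hn (hU.1 _ hu) (hdeg _ hu)] at h1
      obtain ⟨v, rfl⟩ := Multiset.exists_cons_of_mem h1
      exact ⟨v, hu, hG⟩
  rw [htilde, squeezedSphere, squeezedSphere, squeezedBall_eq_generatedBy,
    squeezedBall_eq_generatedBy, hhat, ← hA.linkOf_eq (by omega) hn, ← hA.contraction_eq hn]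
  have hl := hA.linkCondition hn
  exact ⟨shiftComplex_eq_of_linkCondition (by decide) complexBoundary_down_closed hl,
    hl, rfl, rfl⟩
end

section
/- Every squeezed sphere S_d(U) is strongly edge decomposable. -/
/-! Finite unions of disjoint pairs of consecutive integers, indexed by weakly increasing
sequences. -/

/-- The union of the pairs `{a i + 2 i, a i + 2 i + 1}`; for weakly increasing `a` they are
disjoint. -/
def pairs {e : ℕ} (a : Fin e → ℕ) : Finset ℕ :=
  Finset.univ.biUnion fun i => {a i + 2 * (i : ℕ), a i + 2 * (i : ℕ) + 1}

theorem mem_pairs {e : ℕ} {a : Fin e → ℕ} {x : ℕ} :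
    x ∈ pairs a ↔ ∃ i, x = a i + 2 * (i : ℕ) ∨ x = a i + 2 * (i : ℕ) + 1 := by
  simp [pairs]

theorem left_mem_pairs {e : ℕ} (a : Fin e → ℕ) (i : Fin e) : a i + 2 * (i : ℕ) ∈ pairs a :=
  mem_pairs.2 ⟨i, Or.inl rfl⟩

theorem right_mem_pairs {e : ℕ} (a : Fin e → ℕ) (i : Fin e) : a i + 2 * (i : ℕ) + 1 ∈ pairs a :=
  mem_pairs.2 ⟨i, Or.inr rfl⟩

theorem card_pairs {e : ℕ} {a : Fin e → ℕ} (ha : Monotone a) : (pairs a).card = 2 * e := by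
  rw [pairs, Finset.card_biUnion]
  · simp [mul_comm]
  · intro i _ j _ hij
    rw [Function.onFun, Finset.disjoint_left]
    intro x hx hy
    simp only [Finset.mem_insert, Finset.mem_singleton] at hx hy
    rcases lt_or_gt_of_ne hij with h | h
    · have := ha h.le
      have : (i : ℕ) < j := h
      omega
    · have := ha h.le
      have : (j : ℕ) < i := h
      omega

theorem mem_pairs_inf {e : ℕ} {a b : Fin e → ℕ} (ha : Monotone a) (hb : Monotone b) {x : ℕ}
    (hxa : x ∈ pairs a) (hxb : x ∈ pairs b) : x ∈ pairs (a ⊓ b) := by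
  obtain ⟨i, hi⟩ := mem_pairs.1 hxa
  obtain ⟨k, hk⟩ := mem_pairs.1 hxb
  rcases lt_trichotomy i k with h | rfl | h
  · have h1 := ha h.le
    have h2 : (i : ℕ) < k := h
    exact mem_pairs.2 ⟨k, by simp only [Pi.inf_apply]; omega⟩
  · exact mem_pairs.2 ⟨i, by simp only [Pi.inf_apply]; omega⟩
  · have h1 := hb h.le
    have h2 : (k : ℕ) < i := h
    exact mem_pairs.2 ⟨i, by simp only [Pi.inf_apply]; omega⟩

theorem mem_pairs_sup {e : ℕ} {a b : Fin e → ℕ} (ha : Monotone a) (hb : Monotone b) {x : ℕ}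
    (hxa : x ∈ pairs a) (hxb : x ∈ pairs b) : x ∈ pairs (a ⊔ b) := by
  obtain ⟨i, hi⟩ := mem_pairs.1 hxa
  obtain ⟨k, hk⟩ := mem_pairs.1 hxb
  rcases lt_trichotomy i k with h | rfl | h
  · have h1 := hb h.le
    have h2 : (i : ℕ) < k := h
    exact mem_pairs.2 ⟨i, by simp only [Pi.sup_apply]; omega⟩
  · exact mem_pairs.2 ⟨i, by simp only [Pi.sup_apply]; omega⟩
  · have h1 := ha h.le
    have h2 : (k : ℕ) < i := h
    exact mem_pairs.2 ⟨k, by simp only [Pi.sup_apply]; omega⟩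

theorem mem_pairs_sup_const {e : ℕ} {b : Fin e → ℕ} (hb : Monotone b) {x c : ℕ}
    (hx : x ∈ pairs b) (hc : c ≤ x) : x ∈ pairs (fun i => max (b i) c) := by
  obtain ⟨i, hi⟩ := mem_pairs.1 hx
  by_cases h : c ≤ b i
  · exact mem_pairs.2 ⟨i, by omega⟩
  · have hlt := i.isLt
    let j : Fin e := ⟨(x - c) / 2, by omega⟩
    have hj : (j : ℕ) = (x - c) / 2 := rfl
    have hji : j ≤ i := by
      show (j : ℕ) ≤ i
      omega
    have := hb hji
    exact mem_pairs.2 ⟨j, by omega⟩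

theorem exists_right_notMem_pairs {e : ℕ} {a c : Fin e → ℕ} (ha : Monotone a)
    (hca : c ≤ a) (hne : c ≠ a) :
    ∃ j, c j < a j ∧ a j + 2 * (j : ℕ) + 1 ∉ pairs c := by
  have hex : (Finset.univ.filter fun j => c j < a j).Nonempty := by
    by_contra h
    apply hne
    funext i
    refine le_antisymm (hca i) (not_lt.1 fun hi => h ⟨i, by simpa using hi⟩)
  obtain ⟨j, hj, hmax⟩ := Finset.exists_max_image _ (fun j => j) hex
  simp only [Finset.mem_filter, Finset.mem_univ, true_and] at hj hmax
  refine ⟨j, hj, fun hmem => ?_⟩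
  obtain ⟨k, hk⟩ := mem_pairs.1 hmem
  rcases lt_trichotomy j k with h | rfl | h
  · have h1 : ¬ c k < a k := fun hh => absurd (hmax k hh) (not_le.2 h)
    have h2 := ha h.le
    have h3 : (j : ℕ) < k := h
    omega
  · omega
  · have h1 := hca k
    have h2 := ha h.le
    have h3 : (k : ℕ) < j := h
    simp only at h1
    omega

theorem exists_left_notMem_pairs {e : ℕ} {a c : Fin e → ℕ} (ha : Monotone a)
    (hac : a ≤ c) (hne : a ≠ c) :
    ∃ j, a j + 2 * (j : ℕ) ∉ pairs c := by
  have hex : (Finset.univ.filter fun j => a j < c j).Nonempty := by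
    by_contra h
    apply hne
    funext i
    refine le_antisymm (hac i) (not_lt.1 fun hi => h ⟨i, by simpa using hi⟩)
  obtain ⟨j, hj, hmin⟩ := Finset.exists_min_image _ (fun j => j) hex
  simp only [Finset.mem_filter, Finset.mem_univ, true_and] at hj hmin
  refine ⟨j, fun hmem => ?_⟩
  obtain ⟨k, hk⟩ := mem_pairs.1 hmem
  rcases lt_trichotomy k j with h | rfl | h
  · have h1 : ¬ a k < c k := fun hh => absurd (hmin k hh) (not_le.2 h)
    have h2 := ha h.le
    have h3 : (k : ℕ) < j := h
    omega
  · omega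
  · have h1 := hac k
    have h2 := ha h.le
    have h3 : (j : ℕ) < k := h
    simp only at h1
    omega

theorem eq_of_pairs_subset {e : ℕ} {a b : Fin e → ℕ} (ha : Monotone a) (hb : Monotone b)
    (h : pairs a ⊆ pairs b) : a = b := by
  have h1 : a ⊓ b = a := by
    by_contra hne
    obtain ⟨j, -, hj⟩ := exists_right_notMem_pairs ha inf_le_left hne
    exact hj (mem_pairs_inf ha hb (right_mem_pairs a j) (h (right_mem_pairs a j)))
  have h2 : a = a ⊔ b := by
    by_contra hne
    obtain ⟨j, hj⟩ := exists_left_notMem_pairs ha le_sup_left hne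
    exact hj (mem_pairs_sup ha hb (left_mem_pairs a j) (h (left_mem_pairs a j)))
  exact le_antisymm (inf_eq_left.1 h1) (sup_eq_left.1 h2.symm)

/-- Move the pairs with index at most `j` and value `a j` one step to the left. -/
def lowerRun {e : ℕ} (a : Fin e → ℕ) (j : Fin e) : Fin e → ℕ :=
  fun i => if i ≤ j ∧ a i = a j then a j - 1 else a i

/-- Move the pairs with index at least `j` and value `a j` one step to the right. -/
def raiseRun {e : ℕ} (a : Fin e → ℕ) (j : Fin e) : Fin e → ℕ :=
  fun i => if j ≤ i ∧ a i = a j then a j + 1 else a i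

theorem monotone_lowerRun {e : ℕ} {a : Fin e → ℕ} (ha : Monotone a) (j : Fin e) :
    Monotone (lowerRun a j) := by
  intro i k hik
  have h1 := ha hik
  simp only [lowerRun]
  split_ifs with h2 h3 h3
  · exact le_rfl
  · omega
  · have h4 : ¬ a i = a j := fun h => h2 ⟨hik.trans h3.1, h⟩
    omega
  · exact h1

theorem monotone_raiseRun {e : ℕ} {a : Fin e → ℕ} (ha : Monotone a) (j : Fin e) :
    Monotone (raiseRun a j) := by
  intro i k hik
  have h1 := ha hik
  simp only [raiseRun]
  split_ifs with h2 h3 h3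
  · exact le_rfl
  · have h4 : ¬ a k = a j := fun h => h3 ⟨h2.1.trans hik, h⟩
    omega
  · omega
  · exact h1

theorem mem_pairs_lowerRun {e : ℕ} {a : Fin e → ℕ} (ha : Monotone a) {j : Fin e} {x : ℕ}
    (hx : x ∈ pairs a) (hne : x ≠ a j + 2 * (j : ℕ) + 1) : x ∈ pairs (lowerRun a j) := by
  obtain ⟨i, hi⟩ := mem_pairs.1 hx
  by_cases h : i ≤ j ∧ a i = a j
  · rcases Nat.eq_zero_or_pos (a j) with h0 | h0
    · exact mem_pairs.2 ⟨i, by simp only [lowerRun, if_pos h]; omega⟩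
    rcases hi with hi | hi
    · exact mem_pairs.2 ⟨i, by simp only [lowerRun, if_pos h]; omega⟩
    · have h1 : (i : ℕ) ≠ j := by
        intro h'
        apply hne
        omega
      have h2 : (i : ℕ) ≤ j := h.1
      let k : Fin e := ⟨i + 1, by omega⟩
      have hk : (k : ℕ) = i + 1 := rfl
      have hkj : k ≤ j := by
        show (k : ℕ) ≤ j
        omega
      have hik : i ≤ k := by
        show (i : ℕ) ≤ k
        omega
      have h3 := ha hkj
      have h4 := ha hik
      have h5 : k ≤ j ∧ a k = a j := ⟨hkj, by omega⟩
      exact mem_pairs.2 ⟨k, by simp only [lowerRun, if_pos h5]; omega⟩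
  · exact mem_pairs.2 ⟨i, by simp only [lowerRun, if_neg h]; exact hi⟩

theorem mem_pairs_raiseRun {e : ℕ} {a : Fin e → ℕ} (ha : Monotone a) {j : Fin e} {x : ℕ}
    (hx : x ∈ pairs a) (hne : x ≠ a j + 2 * (j : ℕ)) : x ∈ pairs (raiseRun a j) := by
  obtain ⟨i, hi⟩ := mem_pairs.1 hx
  by_cases h : j ≤ i ∧ a i = a j
  · rcases hi with hi | hi
    · have h1 : (i : ℕ) ≠ j := by
        intro h'
        apply hne
        omega
      have h2 : (j : ℕ) ≤ i := h.1
      let k : Fin e := ⟨i - 1, by omega⟩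
      have hk : (k : ℕ) = i - 1 := rfl
      have hkj : j ≤ k := by
        show (j : ℕ) ≤ k
        omega
      have hik : k ≤ i := by
        show (k : ℕ) ≤ i
        omega
      have h3 := ha hkj
      have h4 := ha hik
      have h5 : j ≤ k ∧ a k = a j := ⟨hkj, by omega⟩
      exact mem_pairs.2 ⟨k, by simp only [raiseRun, if_pos h5]; omega⟩
    · exact mem_pairs.2 ⟨i, by simp only [raiseRun, if_pos h]; omega⟩
  · exact mem_pairs.2 ⟨i, by simp only [raiseRun, if_neg h]; exact hi⟩

theorem lowerRun_self {e : ℕ} (a : Fin e → ℕ) (j : Fin e) : lowerRun a j j = a j - 1 := by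
  simp [lowerRun]

theorem raiseRun_self {e : ℕ} (a : Fin e → ℕ) (j : Fin e) : raiseRun a j j = a j + 1 := by
  simp [raiseRun]

theorem lowerRun_le {e : ℕ} (a : Fin e → ℕ) (j : Fin e) : lowerRun a j ≤ a := by
  intro i
  simp only [lowerRun]
  split_ifs with h <;> omega

theorem le_lowerRun {e : ℕ} {a c : Fin e → ℕ} (hc : Monotone c) {j : Fin e} (hca : c ≤ a)
    (hj : c j < a j) : c ≤ lowerRun a j := by
  intro i
  have h1 := hca i
  simp only [lowerRun]
  split_ifs with h
  · have h2 := hc h.1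
    omega
  · exact h1

/-- Every ridge of the complex of unions of pairs lies in a second facet. -/
theorem exists_ne_pairs {e : ℕ} {a : Fin e → ℕ} (ha : Monotone a) (hpos : ∀ i, 1 ≤ a i) {x : ℕ}
    (hx : x ∈ pairs a) : ∃ b, Monotone b ∧ b ≠ a ∧ ∀ y ∈ pairs a, y ≠ x → y ∈ pairs b := by
  obtain ⟨j, rfl | rfl⟩ := mem_pairs.1 hx
  · refine ⟨raiseRun a j, monotone_raiseRun ha j, fun h => ?_,
      fun y hy hne => mem_pairs_raiseRun ha hy hne⟩
    have := raiseRun_self a j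
    rw [h] at this
    omega
  · refine ⟨lowerRun a j, monotone_lowerRun ha j, fun h => ?_,
      fun y hy hne => mem_pairs_lowerRun ha hy hne⟩
    have h1 := lowerRun_self a j
    have h2 := hpos j
    rw [h] at h1
    omega

/-- A ridge of the complex of unions of pairs lies in at most two facets. -/
theorem eq_or_eq_lowerRun {e : ℕ} {a c : Fin e → ℕ} (ha : Monotone a) (hc : Monotone c)
    {j : Fin e} (h : (pairs a).erase (a j + 2 * (j : ℕ) + 1) ⊆ pairs c) :
    c = a ∨ c = lowerRun a j := by
  have hca : c ≤ a := by
    by_contra hnle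
    have hne : a ≠ a ⊔ c := fun h => hnle (sup_eq_left.1 h.symm)
    obtain ⟨k, hk⟩ := exists_left_notMem_pairs ha le_sup_left hne
    refine hk (mem_pairs_sup ha hc (left_mem_pairs a k)
      (h (Finset.mem_erase.2 ⟨fun heq => ?_, left_mem_pairs a k⟩)))
    rcases le_total j k with hjk | hjk
    · have h1 := ha hjk
      have h2 : (j : ℕ) ≤ k := hjk
      rcases h2.eq_or_lt with h3 | h3
      · have := Fin.ext h3
        subst this
        omega
      · omega
    · have h1 := ha hjk
      have h2 : (k : ℕ) ≤ j := hjk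
      omega
  have hright : ∀ k, a k + 2 * (k : ℕ) + 1 = a j + 2 * (j : ℕ) + 1 → k = j := by
    intro k hk
    rcases lt_trichotomy j k with hjk | hjk | hjk
    · have h1 := ha hjk.le
      have h2 : (j : ℕ) < k := hjk
      omega
    · exact hjk.symm
    · have h1 := ha hjk.le
      have h2 : (k : ℕ) < j := hjk
      omega
  by_contra! hcon
  obtain ⟨k, hklt, hk⟩ := exists_right_notMem_pairs ha hca hcon.1
  have hkj : k = j := by
    by_contra hne
    exact hk (h (Finset.mem_erase.2 ⟨fun heq => hne (hright k heq), right_mem_pairs a k⟩))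
  subst hkj
  obtain ⟨i, -, hi⟩ := exists_right_notMem_pairs (monotone_lowerRun ha k)
    (le_lowerRun hc hca hklt) hcon.2
  by_cases hrun : i ≤ k ∧ a i = a k
  · have h1 : lowerRun a k i = a k - 1 := by simp only [lowerRun, if_pos hrun]
    have h2 : lowerRun a k i + 2 * (i : ℕ) + 1 = a i + 2 * (i : ℕ) := by omega
    rw [h2] at hi
    refine hi (h (Finset.mem_erase.2 ⟨fun heq => ?_, left_mem_pairs a i⟩))
    have h3 : (i : ℕ) ≤ k := hrun.1
    omega
  · have h1 : lowerRun a k i = a i := by simp only [lowerRun, if_neg hrun]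
    rw [h1] at hi
    refine hi (h (Finset.mem_erase.2 ⟨fun heq => ?_, right_mem_pairs a i⟩))
    have := hright i heq
    subst this
    exact hrun ⟨le_rfl, rfl⟩

theorem exists_lowerRun_mem_xor {e : ℕ} (W : Set (Fin e → ℕ)) {G : Finset ℕ} {y : Fin e → ℕ}
    (hy : Monotone y) (hGy : G ⊆ pairs y) (x : Fin e → ℕ) (hx : Monotone x) (hGx : G ⊆ pairs x)
    (hyx : y ≤ x) (hW : ¬ (x ∈ W ↔ y ∈ W)) :
    ∃ p : Fin e → ℕ, ∃ j, Monotone p ∧ G ⊆ (pairs p).erase (p j + 2 * (j : ℕ) + 1) ∧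
      ¬ (p ∈ W ↔ lowerRun p j ∈ W) := by
  induction hs : ∑ i, x i using Nat.strong_induction_on generalizing x with
  | _ s ih =>
    have hne : y ≠ x := by
      rintro rfl
      exact hW Iff.rfl
    obtain ⟨j, hlt, hj⟩ := exists_right_notMem_pairs hx hyx hne
    by_cases hstep : x ∈ W ↔ lowerRun x j ∈ W
    · refine ih (∑ i, lowerRun x j i) ?_ (lowerRun x j) (monotone_lowerRun hx j) ?_
        (le_lowerRun hy hyx hlt) (fun h => hW (hstep.trans h)) rfl
      · rw [← hs]
        refine Finset.sum_lt_sum (fun i _ => lowerRun_le x j i) ⟨j, Finset.mem_univ j, ?_⟩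
        rw [lowerRun_self]
        omega
      · intro g hg
        refine mem_pairs_lowerRun hx (hGx hg) ?_
        rintro rfl
        exact hj (hGy hg)
    · refine ⟨x, j, hx, fun g hg => Finset.mem_erase.2 ⟨?_, hGx hg⟩, hstep⟩
      rintro rfl
      exact hj (hGy hg)

theorem monotone_cons {e : ℕ} {l : ℕ} {f : Fin e → ℕ} (hf : Monotone f) (hl : ∀ i, l ≤ f i) :
    Monotone (Fin.cons l f : Fin (e + 1) → ℕ) := by
  intro i j hij
  induction i using Fin.cases with
  | zero =>
    induction j using Fin.cases with
    | zero => exact le_rfl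
    | succ j => simpa using hl j
  | succ i =>
    induction j using Fin.cases with
    | zero => exact absurd hij (by simp)
    | succ j => simpa using hf (Fin.succ_le_succ_iff.1 hij)

theorem mem_pairs_succ {e : ℕ} {a : Fin (e + 1) → ℕ} {x : ℕ} :
    x ∈ pairs a ↔ x = a 0 ∨ x = a 0 + 1 ∨ x ∈ pairs fun i : Fin e => a i.succ + 2 := by
  simp only [mem_pairs, Fin.exists_fin_succ, Fin.val_zero, Fin.val_succ, mul_add, mul_one,
    mul_zero, add_zero, or_assoc]
  refine or_congr_right (or_congr_right (exists_congr fun i => ?_))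
  omega

theorem zero_le_of_mem_pairs {e : ℕ} {a : Fin (e + 1) → ℕ} (ha : Monotone a) {x : ℕ}
    (hx : x ∈ pairs a) : a 0 ≤ x := by
  obtain ⟨i, hi⟩ := mem_pairs.1 hx
  have := ha (Fin.zero_le i)
  omega

/-- The faces `G`, disjoint from `T`, such that `G ∪ T` lies both in a facet belonging to `W` and
in a facet not belonging to `W`: the link of `T` in the boundary of the complex generated
by `W`. -/
def pairSphere {e : ℕ} (W : Set (Fin e → ℕ)) (T : Finset ℕ) : Set (Finset ℕ) :=
  {G | Disjoint G T ∧ (∃ a ∈ W, G ∪ T ⊆ pairs a) ∧ ∃ b, Monotone b ∧ b ∉ W ∧ G ∪ T ⊆ pairs b}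

/-- `W` is a nonempty upper set of weakly increasing sequences with values in `[l, M]`, and `T`
is empty or consists of the last vertex and is contained in all facets. -/
structure PairFamily (e M l : ℕ) (W : Set (Fin (e + 1) → ℕ)) (T : Finset ℕ) : Prop where
  pos : 1 ≤ l
  mono : ∀ a ∈ W, Monotone a
  lower : ∀ a ∈ W, ∀ i, l ≤ a i
  upper : ∀ a ∈ W, ∀ i, a i ≤ M
  up : ∀ a ∈ W, ∀ b, Monotone b → a ≤ b → (∀ i, b i ≤ M) → b ∈ W
  nonempty : W.Nonempty
  subset_last : T ⊆ {M + 2 * e + 1}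
  subset_pairs : ∀ a ∈ W, T ⊆ pairs a

namespace PairFamily

variable {e M l : ℕ} {W : Set (Fin (e + 1) → ℕ)} {T : Finset ℕ}

theorem const_mem (h : PairFamily e M l W T) : (fun _ => M) ∈ W := by
  obtain ⟨a, ha⟩ := h.nonempty
  exact h.up a ha _ monotone_const (h.upper a ha) fun _ => le_rfl

theorem mem_of_monotone (h : PairFamily e M l W T) {a b : Fin (e + 1) → ℕ} (ha : a ∈ W)
    (hb : Monotone b) (hab : a ≤ b) (hlast : b (Fin.last e) ≤ M) : b ∈ W :=
  h.up a ha b hb hab fun i => (hb (Fin.le_last i)).trans hlast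

theorem exists_ridge (h : PairFamily e M l W T) {G : Finset ℕ} {a b : Fin (e + 1) → ℕ}
    (ha : a ∈ W) (hGa : G ⊆ pairs a) (hb : Monotone b) (hbW : b ∉ W) (hGb : G ⊆ pairs b) :
    ∃ p : Fin (e + 1) → ℕ, ∃ j, Monotone p ∧ G ⊆ (pairs p).erase (p j + 2 * (j : ℕ) + 1) ∧
      ¬ (p ∈ W ↔ lowerRun p j ∈ W) := by
  have hma := h.mono a ha
  by_cases hM : ∀ i, b i ≤ M
  · have hnot : a ⊓ b ∉ W := fun hmem => hbW (h.up _ hmem b hb inf_le_right hM)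
    refine exists_lowerRun_mem_xor W (hma.inf hb)
      (fun g hg => mem_pairs_inf hma hb (hGa hg) (hGb hg)) a hma hGa inf_le_left ?_
    tauto
  · have hnot : a ⊔ b ∉ W := fun hmem =>
      hM fun i => (le_sup_right : b ≤ a ⊔ b) i |>.trans (h.upper _ hmem i)
    refine exists_lowerRun_mem_xor W hma hGa (a ⊔ b) (hma.sup hb)
      (fun g hg => mem_pairs_sup hma hb (hGa hg) (hGb hg)) le_sup_left ?_
    tauto

/-- Every face of `pairSphere W T` lies in a ridge which is contained in a unique facet from
`W`. -/
theorem exists_ridge_of_mem (h : PairFamily e M l W T) {G : Finset ℕ} (hG : G ∈ pairSphere W T) :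
    ∃ H, G ⊆ H ∧ Disjoint H T ∧ H.card + T.card = 2 * e + 1 ∧
      ∃ w ∈ W, (∀ c, Monotone c → H ∪ T ⊆ pairs c → (c ∈ W ↔ c = w)) ∧ H ∪ T ⊆ pairs w ∧
        ∃ b, Monotone b ∧ b ∉ W ∧ H ∪ T ⊆ pairs b := by
  obtain ⟨hGT, ⟨a, ha, hGa⟩, b, hb, hbW, hGb⟩ := hG
  obtain ⟨p, j, hp, hsub, hxor⟩ := h.exists_ridge ha hGa hb hbW hGb
  have hT : T ⊆ (pairs p).erase (p j + 2 * (j : ℕ) + 1) :=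
    Finset.subset_union_right.trans hsub
  have hunion : ((pairs p).erase (p j + 2 * (j : ℕ) + 1) \ T) ∪ T =
      (pairs p).erase (p j + 2 * (j : ℕ) + 1) := Finset.sdiff_union_of_subset hT
  have hlow : (pairs p).erase (p j + 2 * (j : ℕ) + 1) ⊆ pairs (lowerRun p j) := fun x hx =>
    mem_pairs_lowerRun hp (Finset.mem_erase.1 hx).2 (Finset.mem_erase.1 hx).1
  refine ⟨(pairs p).erase (p j + 2 * (j : ℕ) + 1) \ T, ?_, Finset.sdiff_disjoint, ?_, ?_⟩
  · exact Finset.subset_sdiff.2 ⟨Finset.subset_union_left.trans hsub, hGT⟩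
  · rw [Finset.card_sdiff_add_card_eq_card hT, Finset.card_erase_of_mem (right_mem_pairs p j),
      card_pairs hp]
    omega
  · rw [hunion]
    by_cases hpW : p ∈ W
    · have hlW : lowerRun p j ∉ W := by tauto
      refine ⟨p, hpW, fun c hc hsubc => ⟨fun hcW => ?_, ?_⟩, Finset.erase_subset _ _,
        lowerRun p j, monotone_lowerRun hp j, hlW, hlow⟩
      · rcases eq_or_eq_lowerRun hp hc hsubc with rfl | rfl
        · rfl
        · exact absurd hcW hlW
      · rintro rfl
        exact hpW
    · have hlW : lowerRun p j ∈ W := by tauto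
      refine ⟨lowerRun p j, hlW, fun c hc hsubc => ⟨fun hcW => ?_, ?_⟩, hlow,
        p, hp, hpW, Finset.erase_subset _ _⟩
      · rcases eq_or_eq_lowerRun hp hc hsubc with rfl | rfl
        · exact absurd hcW hpW
        · rfl
      · rintro rfl
        exact hlW

theorem pureComplex (h : PairFamily e M l W T) : PureComplex (pairSphere W T) := by
  have key : ∀ F, IsFacet (pairSphere W T) F → F.card + T.card = 2 * e + 1 := by
    intro F hF
    obtain ⟨H, hFH, hHT, hcard, w, hw, -, hHw, b, hb, hbW, hHb⟩ := h.exists_ridge_of_mem hF.1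
    rw [hF.2 H ⟨hHT, ⟨w, hw, hHw⟩, b, hb, hbW, hHb⟩ hFH]
    exact hcard
  intro F G hF hG
  have h1 := key F hF
  have h2 := key G hG
  omega

/-- If `W` consists of a single facet then `pairSphere W T` is the boundary of a simplex. -/
theorem stronglyEdgeDecomposable_of_eq_const (h : PairFamily e M l W T) (hl : l = M) :
    StronglyEdgeDecomposable (pairSphere W T) := by
  have hconst : ∀ a ∈ W, a = fun _ => M := fun a ha =>
    funext fun i => le_antisymm (h.upper a ha i) (hl ▸ h.lower a ha i)
  have hc : (fun _ => M) ∈ W := h.const_mem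
  have hTc := h.subset_pairs _ hc
  have heq : pairSphere W T =
      {F | F ⊆ pairs (fun _ : Fin (e + 1) => M) \ T ∧ F ≠ pairs (fun _ : Fin (e + 1) => M) \ T} := by
    ext G
    constructor
    · rintro ⟨hGT, ⟨a, ha, hGa⟩, b, hb, hbW, hGb⟩
      rw [hconst a ha] at hGa
      refine ⟨Finset.subset_sdiff.2 ⟨Finset.subset_union_left.trans hGa, hGT⟩, ?_⟩
      rintro rfl
      rw [Finset.sdiff_union_of_subset hTc] at hGb
      exact hbW (eq_of_pairs_subset monotone_const hb hGb ▸ hc)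
    · rintro ⟨hsub, hne⟩
      obtain ⟨hG, hGT⟩ := Finset.subset_sdiff.1 hsub
      obtain ⟨x, hx, hxG⟩ := Finset.exists_of_ssubset (hsub.ssubset_of_ne hne)
      obtain ⟨hxp, hxT⟩ := Finset.mem_sdiff.1 hx
      obtain ⟨b, hb, hbne, hbsub⟩ := exists_ne_pairs monotone_const
        (fun _ => hl ▸ h.pos) hxp
      refine ⟨hGT, ⟨_, hc, Finset.union_subset hG hTc⟩, b, hb, fun hbW => hbne (hconst b hbW),
        fun y hy => hbsub y (Finset.union_subset hG hTc hy) ?_⟩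
      rintro rfl
      exact (Finset.mem_union.1 hy).elim hxG hxT
  rw [heq]
  refine StronglyEdgeDecomposable.simplexBoundary _ ⟨M, Finset.mem_sdiff.2 ⟨?_, fun hM => ?_⟩⟩
  · exact mem_pairs.2 ⟨0, by simp⟩
  · have := Finset.mem_singleton.1 (h.subset_last hM)
    omega

/-- For sequences of length one `pairSphere W T` is the boundary of a segment. -/
theorem stronglyEdgeDecomposable_of_length_one {W : Set (Fin (0 + 1) → ℕ)}
    (h : PairFamily 0 M l W T) (hlM : l < M) (hex : ∃ a ∈ W, a 0 = l) :
    StronglyEdgeDecomposable (pairSphere W T) := by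
  obtain ⟨a, ha, ha0⟩ := hex
  have : Subsingleton (Fin (0 + 1)) := inferInstanceAs (Subsingleton (Fin 1))
  have hmem : ∀ (b : Fin (0 + 1) → ℕ) x, x ∈ pairs b ↔ x = b 0 ∨ x = b 0 + 1 := by
    intro b x
    simp [mem_pairs]
  have hW : ∀ b : Fin (0 + 1) → ℕ, b ∈ W ↔ l ≤ b 0 ∧ b 0 ≤ M := by
    intro b
    refine ⟨fun hb => ⟨h.lower b hb 0, h.upper b hb 0⟩, fun hb => h.up a ha b ?_ ?_ ?_⟩
    · exact Subsingleton.monotone b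
    · intro i
      rw [Subsingleton.elim i 0, ha0]
      exact hb.1
    · intro i
      rw [Subsingleton.elim i 0]
      exact hb.2
  have hT : T = ∅ := by
    refine Finset.eq_empty_of_forall_notMem fun x hx => ?_
    have h1 := Finset.mem_singleton.1 (h.subset_last hx)
    have h2 := (hmem a x).1 (h.subset_pairs a ha hx)
    omega
  subst hT
  have heq : pairSphere W ∅ = {F | F ⊆ {l, M + 1} ∧ F ≠ {l, M + 1}} := by
    ext G
    constructor
    · rintro ⟨-, ⟨b, hb, hGb⟩, c, hc, hcW, hGc⟩
      rw [hW] at hb hcW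
      rw [Finset.union_empty] at hGb hGc
      refine ⟨fun x hx => ?_, ?_⟩
      · have h1 := (hmem b x).1 (hGb hx)
        have h2 := (hmem c x).1 (hGc hx)
        simp only [Finset.mem_insert, Finset.mem_singleton]
        omega
      · rintro rfl
        have h1 := (hmem b l).1 (hGb (by simp))
        have h2 := (hmem b (M + 1)).1 (hGb (by simp))
        omega
    · rintro ⟨hsub, hne⟩
      have hor : M + 1 ∉ G ∨ l ∉ G := by
        by_contra! hcon
        refine hne (Finset.Subset.antisymm hsub ?_)
        simp [Finset.insert_subset_iff, hcon.1, hcon.2]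
      have hG : ∀ x ∈ G, x = l ∨ x = M + 1 := fun x hx => by simpa using hsub hx
      refine ⟨Finset.disjoint_empty_right G, ?_⟩
      rw [Finset.union_empty]
      have hpos := h.pos
      rcases hor with hn | hn
      · refine ⟨⟨fun _ => l, (hW _).2 ⟨le_rfl, hlM.le⟩, fun x hx => (hmem _ x).2 ?_⟩,
          fun _ => l - 1, monotone_const, fun hc => ?_, fun x hx => (hmem _ x).2 ?_⟩
        · rcases hG x hx with rfl | rfl
          · exact Or.inl rfl
          · exact absurd hx hn
        · have := ((hW _).1 hc).1
          omega
        · rcases hG x hx with rfl | rfl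
          · right
            omega
          · exact absurd hx hn
      · refine ⟨⟨fun _ => M, (hW _).2 ⟨hlM.le, le_rfl⟩, fun x hx => (hmem _ x).2 ?_⟩,
          fun _ => M + 1, monotone_const, fun hc => ?_, fun x hx => (hmem _ x).2 ?_⟩
        · rcases hG x hx with rfl | rfl
          · exact absurd hx hn
          · exact Or.inr rfl
        · have := ((hW _).1 hc).2
          omega
        · rcases hG x hx with rfl | rfl
          · exact absurd hx hn
          · exact Or.inl rfl
  rw [heq]
  exact StronglyEdgeDecomposable.simplexBoundary _ ⟨l, by simp⟩

theorem zero_eq_of_mem (h : PairFamily e M l W T) {a : Fin (e + 1) → ℕ} (ha : a ∈ W)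
    (hl : l ∈ pairs a) : a 0 = l :=
  le_antisymm (zero_le_of_mem_pairs (h.mono a ha) hl) (h.lower a ha 0)

theorem lt_of_mem_last (h : PairFamily e M l W T) (hlM : l < M) {x : ℕ} (hx : x ∈ T) :
    l + 1 < x := by
  have := Finset.mem_singleton.1 (h.subset_last hx)
  omega

/-- The facets avoiding `l`. -/
theorem filter (h : PairFamily e M l W T) (hlM : l < M) :
    PairFamily e M (l + 1) {a | a ∈ W ∧ l + 1 ≤ a 0} T where
  pos := by omega
  mono a ha := h.mono a ha.1
  lower a ha i := ha.2.trans (h.mono a ha.1 (Fin.zero_le i))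
  upper a ha := h.upper a ha.1
  up a ha b hb hab hM := ⟨h.up a ha.1 b hb hab hM, ha.2.trans (hab 0)⟩
  nonempty := ⟨_, h.const_mem, hlM⟩
  subset_last := h.subset_last
  subset_pairs a ha := h.subset_pairs a ha.1

theorem cons_sub_two_le {e l : ℕ} {c c' : Fin e → ℕ} (h : c ≤ c') :
    (Fin.cons l (fun i => c i - 2) : Fin (e + 1) → ℕ) ≤ Fin.cons l (fun i => c' i - 2) := by
  intro i
  induction i using Fin.cases with
  | zero => exact le_rfl
  | succ i =>
    simp only [Fin.cons_succ]
    exact Nat.sub_le_sub_right (h i) 2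

theorem mem_pairs_cons_sub_two {e k : ℕ} {c : Fin e → ℕ} (hc : ∀ i, 2 ≤ c i) {x : ℕ} :
    x ∈ pairs (Fin.cons k (fun i => c i - 2) : Fin (e + 1) → ℕ) ↔
      x = k ∨ x = k + 1 ∨ x ∈ pairs c := by
  rw [mem_pairs_succ]
  have : (fun i => c i - 2 + 2) = c := funext fun i => Nat.sub_add_cancel (hc i)
  simp only [Fin.cons_zero, Fin.cons_succ, this]

/-- The sequences obtained from the facets containing `l` by removing the first pair. -/
def linkFamily {e : ℕ} (l : ℕ) (W : Set (Fin (e + 2) → ℕ)) : Set (Fin (e + 1) → ℕ) :=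
  {c | Monotone c ∧ (∀ i, l + 2 ≤ c i) ∧ (Fin.cons l (fun i => c i - 2) : Fin (e + 2) → ℕ) ∈ W}

theorem tail_add_two_mem_linkFamily {W : Set (Fin (e + 2) → ℕ)} (h : PairFamily (e + 1) M l W T)
    {a : Fin (e + 2) → ℕ} (ha : a ∈ W) (ha0 : a 0 = l) :
    (fun i : Fin (e + 1) => a i.succ + 2) ∈ linkFamily l W := by
  refine ⟨fun i j hij => ?_, fun i => ?_, ?_⟩
  · have := h.mono a ha (Fin.succ_le_succ_iff.2 hij)
    simp only
    omega
  · exact Nat.add_le_add_right (h.lower a ha i.succ) 2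
  · have : (Fin.cons l (fun i : Fin (e + 1) => a i.succ + 2 - 2) : Fin (e + 2) → ℕ) = a := by
      funext i
      induction i using Fin.cases with
      | zero => exact ha0.symm
      | succ i => simp
    rwa [this]

theorem link {W : Set (Fin (e + 2) → ℕ)} (h : PairFamily (e + 1) M l W T) (hlM : l < M)
    (hex : ∃ a ∈ W, a 0 = l) : PairFamily e (M + 2) (l + 2) (linkFamily l W) T where
  pos := by omega
  mono a ha := ha.1
  lower a ha := ha.2.1
  upper a ha i := by
    have := h.upper _ ha.2.2 i.succ
    simp only [Fin.cons_succ] at this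
    omega
  up a ha b hb hab hM := by
    have hlb : ∀ i, l + 2 ≤ b i := fun i => (ha.2.1 i).trans (hab i)
    refine ⟨hb, hlb, h.up _ ha.2.2 _ (monotone_cons (fun i j hij => ?_) fun i => ?_)
      (cons_sub_two_le hab) fun i => ?_⟩
    · exact Nat.sub_le_sub_right (hb hij) 2
    · have := hlb i
      omega
    · induction i using Fin.cases with
      | zero => exact hlM.le
      | succ i =>
        have := hM i
        simp only [Fin.cons_succ]
        omega
  nonempty := by
    obtain ⟨a, ha, ha0⟩ := hex
    exact ⟨_, h.tail_add_two_mem_linkFamily ha ha0⟩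
  subset_last x hx := by
    have := Finset.mem_singleton.1 (h.subset_last hx)
    exact Finset.mem_singleton.2 (by omega)
  subset_pairs a ha x hx := by
    have h1 := h.lt_of_mem_last hlM hx
    have h2 := h.subset_pairs _ ha.2.2 hx
    rw [mem_pairs_cons_sub_two fun i => (Nat.le_add_left 2 l).trans (ha.2.1 i)] at h2
    rcases h2 with h2 | h2 | h2
    · omega
    · omega
    · exact h2

theorem le_of_mem_pairs {e k : ℕ} {c : Fin e → ℕ} (hc : ∀ i, k ≤ c i) {x : ℕ}
    (hx : x ∈ pairs c) : k ≤ x := by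
  obtain ⟨i, hi⟩ := mem_pairs.1 hx
  have := hc i
  omega

theorem linkOf_pairSphere {W : Set (Fin (e + 2) → ℕ)} (h : PairFamily (e + 1) M l W T)
    (hlM : l < M) :
    linkOf (pairSphere W T) {l, l + 1} = pairSphere (linkFamily l W) T := by
  have hpos := h.pos
  ext G
  constructor
  · rintro ⟨hGl, hGT, ⟨a, ha, hGa⟩, b, hb, hbW, hGb⟩
    have hla : l ∈ pairs a := hGa (by simp)
    have ha0 := h.zero_eq_of_mem ha hla
    have hlG : l ∉ G := fun hl => Finset.disjoint_left.1 hGl hl (by simp)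
    have hlG' : l + 1 ∉ G := fun hl => Finset.disjoint_left.1 hGl hl (by simp)
    have hlink := h.tail_add_two_mem_linkFamily ha ha0
    have hGTa : G ∪ T ⊆ pairs fun i : Fin (e + 1) => a i.succ + 2 := by
      intro x hx
      have hxa : x ∈ pairs a := hGa (by
        rcases Finset.mem_union.1 hx with hx | hx <;> simp [hx])
      rcases mem_pairs_succ.1 hxa with h1 | h1 | h1
      · rw [ha0] at h1
        subst h1
        rcases Finset.mem_union.1 hx with hx | hx
        · exact absurd hx hlG
        · have := h.lt_of_mem_last hlM hx
          omega
      · rw [ha0] at h1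
        subst h1
        rcases Finset.mem_union.1 hx with hx | hx
        · exact absurd hx hlG'
        · have := h.lt_of_mem_last hlM hx
          omega
      · exact h1
    have hlb : l ∈ pairs b := hGb (by simp)
    have hlb' : l + 1 ∈ pairs b := hGb (by simp)
    have hb0 := zero_le_of_mem_pairs hb hlb
    refine ⟨hGT.mono_left Finset.subset_union_left, ⟨_, hlink, hGTa⟩,
      fun i => b i.succ + 2, fun i j hij => ?_, fun hmem => hbW ?_, fun x hx => ?_⟩
    · exact Nat.add_le_add_right (hb (Fin.succ_le_succ_iff.2 hij)) 2
    · have hge : ∀ x, x ∈ pairs (fun i : Fin (e + 1) => b i.succ + 2) → l + 2 ≤ x :=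
        fun x hx => le_of_mem_pairs hmem.2.1 hx
      have hb0l : b 0 = l := by
        rcases mem_pairs_succ.1 hlb with h1 | h1 | h1
        · exact h1.symm
        · rcases mem_pairs_succ.1 hlb' with h2 | h2 | h2
          · omega
          · omega
          · have := hge _ h2
            omega
        · have := hge _ h1
          omega
      have : (Fin.cons l (fun i : Fin (e + 1) => b i.succ + 2 - 2) : Fin (e + 2) → ℕ) = b := by
        funext i
        induction i using Fin.cases with
        | zero => exact hb0l.symm
        | succ i => simp
      exact this ▸ hmem.2.2
    · have hxl : l + 2 ≤ x := le_of_mem_pairs hlink.2.1 (hGTa hx)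
      have hxb : x ∈ pairs b := hGb (by
        rcases Finset.mem_union.1 hx with hx | hx <;> simp [hx])
      rcases mem_pairs_succ.1 hxb with h1 | h1 | h1
      · omega
      · omega
      · exact h1
  · rintro ⟨hGT, ⟨a, ha, hGa⟩, b, hb, hbW, hGb⟩
    have hge : ∀ x ∈ G ∪ T, l + 2 ≤ x := fun x hx => le_of_mem_pairs ha.2.1 (hGa hx)
    have hcover : ∀ {k} {c : Fin (e + 1) → ℕ}, (∀ i, 2 ≤ c i) → G ∪ T ⊆ pairs c →
        (l = k ∨ l = k + 1 ∨ l ∈ pairs c) → (l + 1 = k ∨ l + 1 = k + 1 ∨ l + 1 ∈ pairs c) →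
        G ∪ {l, l + 1} ∪ T ⊆ pairs (Fin.cons k (fun i => c i - 2) : Fin (e + 2) → ℕ) := by
      intro k c hc hsub h1 h2 x hx
      rw [mem_pairs_cons_sub_two hc]
      have hx' : x = l ∨ x = l + 1 ∨ x ∈ G ∪ T := by
        simp only [Finset.mem_union, Finset.mem_insert, Finset.mem_singleton] at hx ⊢
        tauto
      rcases hx' with rfl | rfl | hx'
      · exact h1
      · exact h2
      · exact Or.inr (Or.inr (hsub hx'))
    refine ⟨?_, ?_, ⟨_, ha.2.2, ?_⟩, ?_⟩
    · rw [Finset.disjoint_left]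
      intro x hx hxl
      have := hge x (Finset.mem_union_left _ hx)
      simp only [Finset.mem_insert, Finset.mem_singleton] at hxl
      omega
    · rw [Finset.disjoint_union_left]
      refine ⟨hGT, Finset.disjoint_left.2 fun x hx hxT => ?_⟩
      have := hge x (Finset.mem_union_right _ hxT)
      simp only [Finset.mem_insert, Finset.mem_singleton] at hx
      omega
    · exact hcover (fun i => (Nat.le_add_left 2 l).trans (ha.2.1 i)) hGa (Or.inl rfl)
        (Or.inr (Or.inl rfl))
    · by_cases hb0 : l + 2 ≤ b 0
      · have hbl : ∀ i, l + 2 ≤ b i := fun i => hb0.trans (hb (Fin.zero_le i))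
        refine ⟨Fin.cons l fun i => b i - 2, monotone_cons (fun i j hij => ?_) fun i => ?_,
          fun hmem => hbW ⟨hb, hbl, hmem⟩, ?_⟩
        · exact Nat.sub_le_sub_right (hb hij) 2
        · have := hbl i
          omega
        · exact hcover (fun i => (Nat.le_add_left 2 l).trans (hbl i)) hGb (Or.inl rfl)
            (Or.inr (Or.inl rfl))
      · refine ⟨Fin.cons (l - 1) fun i => max (b i) (l + 1) - 2,
          monotone_cons (fun i j hij => ?_) fun i => ?_, fun hmem => ?_, ?_⟩
        · exact Nat.sub_le_sub_right (max_le_max_right (l + 1) (hb hij)) 2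
        · omega
        · have := h.lower _ hmem 0
          simp only [Fin.cons_zero] at this
          omega
        · refine hcover (c := fun i => max (b i) (l + 1)) (fun i => by omega)
            (fun x hx => mem_pairs_sup_const hb (hGb hx) ?_) (Or.inr (Or.inl ?_))
            (Or.inr (Or.inr (mem_pairs_succ.2 (Or.inl ?_))))
          · have := hge x hx
            omega
          · omega
          · omega

theorem exists_notMem_of_zero_eq (h : PairFamily e M l W T) (hlM : l < M) {X : Finset ℕ}
    {a b : Fin (e + 1) → ℕ} (ha : a ∈ W) (ha0 : a 0 = l) (hXa : X ⊆ pairs a) (hb : Monotone b)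
    (hbW : b ∉ W) (hXb : X ⊆ pairs b) (hlb : l + 1 ∈ pairs b) :
    ∃ c, Monotone c ∧ c ∉ W ∧ X ⊆ pairs c ∧ l ∈ pairs c ∧ l + 1 ∈ pairs c := by
  have hpos := h.pos
  have hma := h.mono a ha
  have hXl : ∀ x ∈ X, l ≤ x := fun x hx => le_of_mem_pairs (h.lower a ha) (hXa hx)
  have hb0 := zero_le_of_mem_pairs hb hlb
  have hstart : ∀ {c : Fin (e + 1) → ℕ}, c 0 = l → l ∈ pairs c ∧ l + 1 ∈ pairs c := fun hc =>
    ⟨mem_pairs_succ.2 (Or.inl hc.symm), mem_pairs_succ.2 (Or.inr (Or.inl (by rw [hc])))⟩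
  rcases lt_trichotomy (b 0) l with hlt | heq | hgt
  · refine ⟨fun i => max (b i) (l - 1), fun i j hij => max_le_max_right _ (hb hij), fun hmem => ?_,
      fun x hx => mem_pairs_sup_const hb (hXb hx) ?_, mem_pairs_succ.2 (Or.inr (Or.inl ?_)),
      mem_pairs_sup_const hb hlb ?_⟩
    · have := h.lower _ hmem 0
      omega
    · have := hXl x hx
      omega
    · omega
    · omega
  · exact ⟨b, hb, hbW, hXb, hstart heq⟩
  replace hb0 : b 0 = l + 1 := by omega
  by_cases hlast : b (Fin.last e) ≤ M
  · refine ⟨a ⊓ b, hma.inf hb, fun hmem => hbW (h.mem_of_monotone hmem hb inf_le_right hlast),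
      fun x hx => mem_pairs_inf hma hb (hXa hx) (hXb hx), hstart ?_⟩
    simp only [Pi.inf_apply]
    omega
  by_cases hgap : ∃ j, b j = l + 1 ∧ l + 2 * (j : ℕ) + 2 ∉ X
  · obtain ⟨j, hj, hjX⟩ := hgap
    refine ⟨lowerRun b j, monotone_lowerRun hb j, fun hmem => ?_,
      fun x hx => mem_pairs_lowerRun hb (hXb hx) ?_, hstart ?_⟩
    · have h1 := h.upper _ hmem (Fin.last e)
      simp only [lowerRun] at h1
      split_ifs at h1 <;> omega
    · rintro rfl
      refine hjX (?_ : _ ∈ X)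
      have : l + 2 * (j : ℕ) + 2 = b j + 2 * (j : ℕ) + 1 := by omega
      rwa [this]
    · simp only [lowerRun]
      rw [if_pos ⟨Fin.zero_le j, by omega⟩]
      omega
  push Not at hgap
  obtain ⟨J, hJ, hmin⟩ := Finset.exists_min_image (Finset.univ.filter fun j => b j ≠ l + 1)
    (fun j => j) ⟨Fin.last e, by simp only [Finset.mem_filter, Finset.mem_univ, true_and]; omega⟩
  simp only [Finset.mem_filter, Finset.mem_univ, true_and] at hJ hmin
  have hlow : ∀ i < J, b i = l + 1 := fun i hi => by
    by_contra hne
    exact absurd (hmin i hne) (not_le.2 hi)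
  have hrun : ∀ k : ℕ, ∀ hk : k < e + 1, k ≤ J → a ⟨k, hk⟩ = l := by
    intro k
    induction k with
    | zero => exact fun _ _ => ha0
    | succ k ih =>
      intro hk hkJ
      have h1 := ih (by omega) (by omega)
      have h2 := hXa (hgap ⟨k, by omega⟩ (hlow _ (Fin.lt_def.2 (by simp only; omega))))
      obtain ⟨i, hi⟩ := mem_pairs.1 h2
      simp only at hi
      refine le_antisymm ?_ (h.lower a ha _)
      by_cases hik : (i : ℕ) ≤ k
      · have h3 : a i ≤ a ⟨k, by omega⟩ := hma (Fin.le_def.2 hik)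
        omega
      · have h3 : a ⟨k + 1, hk⟩ ≤ a i := hma (Fin.le_def.2 (by simp only; omega))
        omega
  have hJ0 : (J : ℕ) ≠ 0 := by
    intro h0
    have : J = 0 := Fin.ext h0
    rw [this] at hJ
    exact hJ hb0
  have haJ : a J = l := hrun J J.isLt le_rfl
  have hbJ : l + 2 ≤ b J := by
    have := hb (Fin.zero_le J)
    omega
  have hrb : a J + 2 * (J : ℕ) + 1 ∉ pairs b := by
    intro hmem
    obtain ⟨i, hi⟩ := mem_pairs.1 hmem
    rcases lt_or_ge i J with hiJ | hiJ
    · have h1 := hlow i hiJ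
      have h2 : (i : ℕ) < J := hiJ
      omega
    · have h1 := hb hiJ
      have h2 : (J : ℕ) ≤ i := hiJ
      omega
  obtain ⟨hla, hla'⟩ := hstart ha0
  refine ⟨lowerRun a J, monotone_lowerRun hma J, fun hmem => ?_,
    fun x hx => mem_pairs_lowerRun hma (hXa hx) ?_, mem_pairs_lowerRun hma hla (by omega),
    mem_pairs_lowerRun hma hla' (by omega)⟩
  · have h1 := h.lower _ hmem J
    rw [lowerRun_self] at h1
    omega
  · rintro rfl
    exact hrb (hXb hx)

theorem isLowerSet_pairSphere (W : Set (Fin (e + 1) → ℕ)) (T : Finset ℕ) {F G : Finset ℕ}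
    (hF : F ∈ pairSphere W T) (hGF : G ⊆ F) : G ∈ pairSphere W T := by
  obtain ⟨hFT, ⟨a, ha, hFa⟩, b, hb, hbW, hFb⟩ := hF
  have hsub : G ∪ T ⊆ F ∪ T := Finset.union_subset_union_left hGF
  exact ⟨hFT.mono_left hGF, ⟨a, ha, hsub.trans hFa⟩, b, hb, hbW, hsub.trans hFb⟩

theorem linkCondition (h : PairFamily e M l W T) (hlM : l < M) :
    LinkCondition (pairSphere W T) l (l + 1) := by
  ext G
  constructor
  · rintro ⟨⟨hGl, hGT, ⟨a, ha, hGa⟩, -⟩, hGl', hGT', -, b, hb, hbW, hGb⟩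
    have ha0 := h.zero_eq_of_mem ha (hGa (by simp))
    have hsub : ∀ {s : Finset ℕ}, G ∪ T ⊆ G ∪ s ∪ T := fun {s} =>
      Finset.union_subset_union_left Finset.subset_union_left
    obtain ⟨c, hc, hcW, hXc, hlc, hlc'⟩ := h.exists_notMem_of_zero_eq hlM ha ha0
      (hsub.trans hGa) hb hbW (hsub.trans hGb) (hGb (by simp))
    have hcover : ∀ {f : Fin (e + 1) → ℕ}, G ∪ T ⊆ pairs f → l ∈ pairs f → l + 1 ∈ pairs f →
        G ∪ {l, l + 1} ∪ T ⊆ pairs f := by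
      intro f h1 h2 h3
      rw [Finset.union_right_comm]
      refine Finset.union_subset h1 ?_
      simp [Finset.insert_subset_iff, h2, h3]
    refine ⟨?_, ?_, ⟨a, ha, hcover (hsub.trans hGa) (hGa (by simp)) ?_⟩, c, hc, hcW,
      hcover hXc hlc hlc'⟩
    · rw [Finset.insert_eq, Finset.disjoint_union_right]
      exact ⟨hGl, hGl'⟩
    · rw [Finset.disjoint_union_left] at hGT hGT' ⊢
      rw [Finset.insert_eq, Finset.disjoint_union_left]
      exact ⟨hGT.1, hGT.2, hGT'.2⟩
    · exact mem_pairs_succ.2 (Or.inr (Or.inl (by rw [ha0])))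
  · rintro ⟨hdisj, hmem⟩
    refine ⟨⟨hdisj.mono_right (by simp), isLowerSet_pairSphere W T hmem ?_⟩,
      hdisj.mono_right (by simp), isLowerSet_pairSphere W T hmem ?_⟩ <;>
    exact Finset.union_subset_union_right (by simp)

theorem contraction_pairSphere (h : PairFamily e M l W T) (hlM : l < M) :
    contraction (pairSphere W T) l (l + 1) = pairSphere {a | a ∈ W ∧ l + 1 ≤ a 0} T := by
  have hpos := h.pos
  have hlT : l ∉ T := fun hl => by
    have := h.lt_of_mem_last hlM hl
    omega
  have hlT' : l + 1 ∉ T := fun hl => lt_irrefl _ (h.lt_of_mem_last hlM hl)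
  have hraise : ∀ a ∈ W, a 0 = l → raiseRun a 0 ∈ W ∧ l + 1 ≤ raiseRun a 0 0 := by
    intro a ha ha0
    refine ⟨h.up a ha _ (monotone_raiseRun (h.mono a ha) 0) (fun i => ?_) fun i => ?_, ?_⟩
    · simp only [raiseRun]
      split_ifs <;> omega
    · have := h.upper a ha i
      simp only [raiseRun]
      split_ifs <;> omega
    · rw [raiseRun_self]
      omega
  have hmem_raise : ∀ a ∈ W, a 0 = l → ∀ x ∈ pairs a, x ≠ l → x ∈ pairs (raiseRun a 0) := by
    intro a ha ha0 x hx hne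
    exact mem_pairs_raiseRun (h.mono a ha) hx (by simpa [ha0] using hne)
  ext G
  constructor
  · rintro (⟨⟨hGT, ⟨a, ha, hGa⟩, b, hb, hbW, hGb⟩, hlG⟩ |
      ⟨F, ⟨hFT, ⟨a, ha, hFa⟩, b, hb, hbW, hFb⟩, hlF, rfl⟩)
    · refine ⟨hGT, ?_, b, hb, fun hmem => hbW hmem.1, hGb⟩
      by_cases ha0 : a 0 = l
      · refine ⟨_, hraise a ha ha0, fun x hx => hmem_raise a ha ha0 x (hGa hx) ?_⟩
        rintro rfl
        exact (Finset.mem_union.1 hx).elim hlG hlT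
      · refine ⟨a, ⟨ha, ?_⟩, hGa⟩
        have := h.lower a ha 0
        omega
    · have ha0 := h.zero_eq_of_mem ha (hFa (by simp [hlF]))
      have hsub : F.erase l ∪ {l + 1} ∪ T ⊆ pairs a := by
        intro x hx
        simp only [Finset.mem_union, Finset.mem_erase, Finset.mem_singleton] at hx
        rcases hx with (hx | rfl) | hx
        · exact hFa (by simp [hx.2])
        · exact mem_pairs_succ.2 (Or.inr (Or.inl (by rw [ha0])))
        · exact hFa (by simp [hx])
      refine ⟨?_, ⟨_, hraise a ha ha0, fun x hx => hmem_raise a ha ha0 x (hsub hx) ?_⟩,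
        a, h.mono a ha, fun hmem => ?_, hsub⟩
      · rw [Finset.disjoint_union_left]
        exact ⟨hFT.mono_left (Finset.erase_subset _ _), Finset.disjoint_singleton_left.2 hlT'⟩
      · rintro rfl
        simp [hlT] at hx
      · have := hmem.2
        omega
  · rintro ⟨hGT, ⟨a, ⟨ha, ha1⟩, hGa⟩, b, hb, hbW, hGb⟩
    have hlG : l ∉ G := fun hl => by
      have := zero_le_of_mem_pairs (h.mono a ha) (hGa (Finset.mem_union_left _ hl))
      omega
    by_cases hbW' : b ∈ W
    · have hb0 : b 0 = l := by
        have h1 := h.lower b hbW' 0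
        have h2 : ¬ l + 1 ≤ b 0 := fun h2 => hbW ⟨hbW', h2⟩
        omega
      have hlow : lowerRun b 0 ∉ W := fun hmem => by
        have h1 := h.lower _ hmem 0
        rw [lowerRun_self] at h1
        omega
      have hlow_mem : ∀ x ∈ pairs b, x ≠ l + 1 → x ∈ pairs (lowerRun b 0) := fun x hx hne =>
        mem_pairs_lowerRun hb hx (by simpa [hb0] using hne)
      by_cases hl1 : l + 1 ∈ G
      · have hsub : G.erase (l + 1) ∪ {l} ∪ T ⊆ pairs b := by
          intro x hx
          simp only [Finset.mem_union, Finset.mem_erase, Finset.mem_singleton] at hx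
          rcases hx with (hx | rfl) | hx
          · exact hGb (by simp [hx.2])
          · exact mem_pairs_succ.2 (Or.inl hb0.symm)
          · exact hGb (by simp [hx])
        refine Or.inr ⟨G.erase (l + 1) ∪ {l}, ⟨?_, ⟨b, hbW', hsub⟩, lowerRun b 0,
          monotone_lowerRun hb 0, hlow, fun x hx => hlow_mem x (hsub hx) ?_⟩, by simp, ?_⟩
        · rw [Finset.disjoint_union_left]
          exact ⟨hGT.mono_left (Finset.erase_subset _ _), Finset.disjoint_singleton_left.2 hlT⟩
        · rintro rfl
          simp [hlT'] at hx
        · ext x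
          simp only [Finset.mem_union, Finset.mem_erase, Finset.mem_singleton]
          by_cases hxl : x = l
          · subst hxl
            simp [hlG]
          · by_cases hxl' : x = l + 1
            · simp [hxl', hl1]
            · simp [hxl, hxl']
      · refine Or.inl ⟨⟨hGT, ⟨a, ha, hGa⟩, lowerRun b 0, monotone_lowerRun hb 0, hlow,
          fun x hx => hlow_mem x (hGb hx) ?_⟩, hlG⟩
        rintro rfl
        exact (Finset.mem_union.1 hx).elim hl1 hlT'
    · exact Or.inl ⟨⟨hGT, ⟨a, ha, hGa⟩, b, hb, hbW', hGb⟩, hlG⟩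

theorem edge_mem_pairSphere {W : Set (Fin (e + 2) → ℕ)} (h : PairFamily (e + 1) M l W T)
    (hlM : l < M) (hex : ∃ a ∈ W, a 0 = l) : ({l, l + 1} : Finset ℕ) ∈ pairSphere W T := by
  obtain ⟨a, ha, ha0⟩ := hex
  refine ⟨?_, ⟨a, ha, Finset.union_subset (fun x hx => ?_) (h.subset_pairs a ha)⟩,
    Fin.cons l fun _ => M + 1, monotone_cons monotone_const fun _ => by omega, fun hmem => ?_,
    Finset.union_subset (fun x hx => ?_) fun x hx => ?_⟩
  · rw [Finset.disjoint_left]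
    intro x hx hxT
    have := h.lt_of_mem_last hlM hxT
    simp only [Finset.mem_insert, Finset.mem_singleton] at hx
    omega
  · rw [mem_pairs_succ, ha0]
    simp only [Finset.mem_insert, Finset.mem_singleton] at hx
    tauto
  · have := h.upper _ hmem (Fin.succ 0)
    simp at this
  · rw [mem_pairs_succ, Fin.cons_zero]
    simp only [Finset.mem_insert, Finset.mem_singleton] at hx
    tauto
  · have := Finset.mem_singleton.1 (h.subset_last hx)
    refine mem_pairs.2 ⟨Fin.succ (Fin.last e), Or.inl ?_⟩
    simp only [Fin.cons_succ, Fin.val_succ, Fin.val_last]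
    omega

theorem stronglyEdgeDecomposable (h : PairFamily e M l W T) :
    StronglyEdgeDecomposable (pairSphere W T) := by
  have hle : l ≤ M := by
    obtain ⟨a, ha⟩ := h.nonempty
    exact (h.lower a ha 0).trans (h.upper a ha 0)
  obtain ⟨k, rfl⟩ := Nat.exists_eq_add_of_le hle
  clear hle
  induction e generalizing k l T with
  | zero =>
    induction k generalizing l W T with
    | zero => exact h.stronglyEdgeDecomposable_of_eq_const rfl
    | succ k ihk =>
      by_cases hex : ∃ a ∈ W, a 0 = l
      · exact h.stronglyEdgeDecomposable_of_length_one (by omega) hex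
      · have hf := h.filter (by omega)
        have hW : {a | a ∈ W ∧ l + 1 ≤ a 0} = W := by
          refine Set.sep_eq_self_iff_mem_true.2 fun a ha => ?_
          have h1 := h.lower a ha 0
          have h2 : a 0 ≠ l := fun h2 => hex ⟨a, ha, h2⟩
          omega
        rw [hW, show l + (k + 1) = l + 1 + k by omega] at hf
        exact ihk hf
  | succ e ihe =>
    induction k generalizing l W T with
    | zero => exact h.stronglyEdgeDecomposable_of_eq_const rfl
    | succ k ihk =>
      have hf := h.filter (by omega)
      have hcon : StronglyEdgeDecomposable (pairSphere {a | a ∈ W ∧ l + 1 ≤ a 0} T) := by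
        rw [show l + (k + 1) = l + 1 + k by omega] at hf
        exact ihk hf
      by_cases hex : ∃ a ∈ W, a 0 = l
      · refine StronglyEdgeDecomposable.contract _ l (l + 1) (Nat.lt_succ_self l) h.pureComplex
          (h.edge_mem_pairSphere (by omega) hex) (h.linkCondition (by omega)) ?_ ?_
        · rwa [h.contraction_pairSphere (by omega)]
        · rw [h.linkOf_pairSphere (by omega)]
          have hlk := h.link (by omega) hex
          rw [show l + (k + 1) + 2 = l + 2 + (k + 1) by omega] at hlk
          exact ihe _ hlk
      · have hW : {a | a ∈ W ∧ l + 1 ≤ a 0} = W := by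
          refine Set.sep_eq_self_iff_mem_true.2 fun a ha => ?_
          have h1 := h.lower a ha 0
          have h2 : a 0 ≠ l := fun h2 => hex ⟨a, ha, h2⟩
          omega
        rwa [hW] at hcon

end PairFamily

/-- The increasing enumeration of `u`, continued by the constant `M`. -/
noncomputable def paddedSort (M N : ℕ) (u : Multiset ℕ) (i : Fin N) : ℕ :=
  (u.sort (· ≤ ·)).getD i M

theorem monotone_paddedSort {M N : ℕ} {u : Multiset ℕ} (hu : ∀ x ∈ u, x ≤ M) :
    Monotone (paddedSort M N u) := by
  intro i j hij
  have hij' : (i : ℕ) ≤ j := hij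
  unfold paddedSort
  by_cases hj : (j : ℕ) < (u.sort (· ≤ ·)).length
  · rw [List.getD_eq_getElem _ _ hj, List.getD_eq_getElem _ _ (hij'.trans_lt hj)]
    exact (Multiset.pairwise_sort u (· ≤ ·)).sortedLE.getElem_le_getElem_of_le hij'
  · rw [List.getD_eq_default _ _ (not_lt.1 hj)]
    by_cases hi : (i : ℕ) < (u.sort (· ≤ ·)).length
    · rw [List.getD_eq_getElem _ _ hi]
      exact hu _ ((Multiset.mem_sort _).1 (List.getElem_mem hi))
    · rw [List.getD_eq_default _ _ (not_lt.1 hi)]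

theorem ofFn_getD {M N : ℕ} {L : List ℕ} (hL : L.length ≤ N) :
    List.ofFn (fun i : Fin N => L.getD i M) = L ++ List.replicate (N - L.length) M := by
  refine List.ext_getElem (by simp; omega) fun i h1 h2 => ?_
  rw [List.getElem_ofFn, List.getElem_append]
  split_ifs with h
  · exact List.getD_eq_getElem _ _ h
  · rw [List.getElem_replicate]
    exact List.getD_eq_default _ _ (not_lt.1 h)

theorem filter_paddedSort {M N : ℕ} {u : Multiset ℕ} (hu : ∀ x ∈ u, x < M)
    (hcard : Multiset.card u ≤ N) :
    ((Finset.univ.val.map (paddedSort M N u)).filter (· < M)) = u := by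
  rw [Fin.univ_val_map]
  unfold paddedSort
  rw [ofFn_getD (by simpa using hcard), ← Multiset.coe_add, Multiset.filter_add,
    Multiset.sort_eq, Multiset.filter_eq_self.2 hu, Multiset.filter_eq_nil.2, add_zero]
  intro x hx
  rw [List.eq_of_mem_replicate (Multiset.mem_coe.1 hx)]
  exact lt_irrefl M

theorem getD_filter_lt {M : ℕ} {L : List ℕ} (hL : L.Pairwise (· ≤ ·)) (hM : ∀ x ∈ L, x ≤ M)
    (i : ℕ) : (L.filter (· < M)).getD i M = L.getD i M := by
  induction L generalizing i with
  | nil => rfl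
  | cons x L ih =>
    rw [List.pairwise_cons] at hL
    by_cases hx : x < M
    · rw [List.filter_cons_of_pos (by simpa using hx)]
      cases i with
      | zero => rfl
      | succ i => exact ih hL.2 (fun y hy => hM y (List.mem_cons_of_mem x hy)) i
    · have hall : ∀ y ∈ x :: L, y = M := by
        intro y hy
        refine le_antisymm (hM y hy) ((not_lt.1 hx).trans ?_)
        rcases List.mem_cons.1 hy with rfl | hy
        · exact le_rfl
        · exact hL.1 y hy
      rw [List.filter_eq_nil_iff.2 (by simpa using fun y hy => (hall y hy).ge), List.getD_nil]
      by_cases hi : i < (x :: L).length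
      · rw [List.getD_eq_getElem _ _ hi]
        exact (hall _ (List.getElem_mem hi)).symm
      · rw [List.getD_eq_default _ _ (not_lt.1 hi)]

theorem paddedSort_filter {M N : ℕ} {a : Fin N → ℕ} (ha : Monotone a) (hM : ∀ i, a i ≤ M) :
    paddedSort M N ((Finset.univ.val.map a).filter (· < M)) = a := by
  have hsort : (List.ofFn a).Pairwise (· ≤ ·) := ha.sortedLE_ofFn.pairwise
  funext i
  unfold paddedSort
  rw [Fin.univ_val_map, Multiset.filter_coe, Multiset.coe_sort,
    List.mergeSort_of_pairwise (by simpa using hsort.filter _),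
    getD_filter_lt hsort (by simpa [List.mem_ofFn] using hM),
    List.getD_eq_getElem _ _ (by simp), List.getElem_ofFn]

theorem IsShiftedOrderIdeal.add_filter_mem {m M : ℕ} {U : Set (Multiset ℕ)}
    (hU : IsShiftedOrderIdeal m U) (hM : M ≤ m + 1) {s t : Multiset ℕ}
    (hst : Multiset.Rel (· ≤ ·) s t) (r : Multiset ℕ) (hr : r + s.filter (· < M) ∈ U) :
    r + t.filter (· < M) ∈ U := by
  obtain ⟨-, -, -, hdiv, hshift⟩ := hU
  induction hst generalizing r with
  | zero => exact hr
  | @cons x y s t hxy _ ih =>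
    by_cases hx : x < M
    · rw [Multiset.filter_cons_of_pos (p := (· < M)) _ hx] at hr
      by_cases hy : y < M
      · rw [Multiset.filter_cons_of_pos (p := (· < M)) _ hy, Multiset.add_cons, ← Multiset.cons_add]
        refine ih _ ?_
        rw [Multiset.add_cons] at hr
        rw [Multiset.cons_add]
        rcases hxy.lt_or_eq with h | rfl
        · exact hshift _ x y h (by omega) hr
        · exact hr
      · rw [Multiset.filter_cons_of_neg (p := (· < M)) _ hy]
        refine ih r (hdiv _ hr _ ?_)
        rw [Multiset.add_cons]
        exact Multiset.le_cons_self _ _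
    · rw [Multiset.filter_cons_of_neg (p := (· < M)) _ hx] at hr
      rw [Multiset.filter_cons_of_neg (p := (· < M)) _ (by omega)]
      exact ih r hr

/-- The vertices beyond `n` needed to complete the `d + 1` vertices of a facet of a squeezed
`d`-ball to a union of pairs: there is one such vertex if `d` is even, and none otherwise. -/
def extraVertex (n d : ℕ) : Finset ℕ :=
  Finset.Ioc n (n - d + 2 * (d / 2) + 1)

/-- The sequences whose unions of pairs are the facets of the squeezed ball `B_d(U)`, completed
by `extraVertex n d`. -/
def facetSeqs (n d : ℕ) (U : Set (Multiset ℕ)) : Set (Fin (d / 2 + 1) → ℕ) :=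
  {a | Monotone a ∧ (∀ i, 1 ≤ a i) ∧ (∀ i, a i ≤ n - d) ∧ extraVertex n d ⊆ pairs a ∧
    (Finset.univ.val.map a).filter (· < n - d) ∈ U}

theorem mem_extraVertex {n d x : ℕ} :
    x ∈ extraVertex n d ↔ n < x ∧ x ≤ n - d + 2 * (d / 2) + 1 :=
  Finset.mem_Ioc

theorem Fd_eq_pairs_sdiff {n d : ℕ} (hdn : d < n) {u : Multiset ℕ} (hu : ∀ x ∈ u, x < n - d)
    (hcard : 2 * Multiset.card u ≤ d + 1) :
    Fd n d u = pairs (paddedSort (n - d) (d / 2 + 1) u) \ extraVertex n d := by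
  have hlen : (u.sort (· ≤ ·)).length = Multiset.card u := Multiset.length_sort _
  have hlt : ∀ j < Multiset.card u, ∀ y, (u.sort (· ≤ ·)).getD j y < n - d := by
    intro j hj y
    rw [List.getD_eq_getElem _ _ (hlen.symm ▸ hj)]
    exact hu _ ((Multiset.mem_sort _).1 (List.getElem_mem _))
  have hgetD : ∀ j < Multiset.card u,
      (u.sort (· ≤ ·)).getD j 0 = (u.sort (· ≤ ·)).getD j (n - d) := by
    intro j hj
    rw [List.getD_eq_getElem _ _ (hlen.symm ▸ hj), List.getD_eq_getElem _ _ (hlen.symm ▸ hj)]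
  ext x
  rw [Finset.mem_sdiff, mem_pairs, mem_extraVertex]
  simp only [Fd, Finset.mem_union, Finset.mem_biUnion, Finset.mem_range, Finset.mem_insert,
    Finset.mem_singleton, Finset.mem_Icc, paddedSort]
  constructor
  · rintro (⟨j, hj, hx⟩ | hx)
    · have h1 := hlt j hj 0
      refine ⟨⟨⟨j, by omega⟩, ?_⟩, by omega⟩
      rwa [← hgetD j hj]
    · refine ⟨⟨⟨(x - (n - d)) / 2, by omega⟩, ?_⟩, by omega⟩
      rw [List.getD_eq_default _ _ (by simp only [hlen]; omega)]
      simp only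
      omega
  · rintro ⟨⟨i, hi⟩, hx⟩
    by_cases hik : (i : ℕ) < Multiset.card u
    · exact Or.inl ⟨i, hik, by rwa [hgetD i hik]⟩
    · rw [List.getD_eq_default _ _ (by omega)] at hi
      have := i.isLt
      right
      omega

section

variable {n d : ℕ} {U : Set (Multiset ℕ)}

theorem card_pairs_sdiff (hdn : d < n) {a : Fin (d / 2 + 1) → ℕ} (ha : a ∈ facetSeqs n d U) :
    (pairs a \ extraVertex n d).card = d + 1 := by
  rw [Finset.card_sdiff_of_subset ha.2.2.2.1, card_pairs ha.1, extraVertex, Nat.card_Ioc]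
  omega

theorem mem_squeezedBall (hdn : d < n) (hU : IsShiftedOrderIdeal (n - d - 1) U)
    (hdeg : ∀ u ∈ U, 2 * Multiset.card u ≤ d + 1) {G : Finset ℕ} :
    G ∈ squeezedBall n d U ↔ ∃ a ∈ facetSeqs n d U, G ⊆ pairs a \ extraVertex n d := by
  have hlt : ∀ u ∈ U, ∀ x ∈ u, 1 ≤ x ∧ x < n - d := by
    intro u hu x hx
    have := Finset.mem_Icc.1 (hU.1 u hu x hx)
    omega
  constructor
  · rintro ⟨u, hu, hG⟩
    rw [Fd_eq_pairs_sdiff hdn (fun x hx => (hlt u hu x hx).2) (hdeg u hu)] at hG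
    have hmono : Monotone (paddedSort (n - d) (d / 2 + 1) u) :=
      monotone_paddedSort fun x hx => (hlt u hu x hx).2.le
    have hcard := hdeg u hu
    have hbound : ∀ i, 1 ≤ paddedSort (n - d) (d / 2 + 1) u i ∧
        paddedSort (n - d) (d / 2 + 1) u i ≤ n - d := by
      intro i
      unfold paddedSort
      by_cases hi : (i : ℕ) < (u.sort (· ≤ ·)).length
      · rw [List.getD_eq_getElem _ _ hi]
        have := hlt u hu _ ((Multiset.mem_sort _).1 (List.getElem_mem hi))
        omega
      · rw [List.getD_eq_default _ _ (not_lt.1 hi)]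
        omega
    refine ⟨_, ⟨hmono, fun i => (hbound i).1, fun i => (hbound i).2, fun x hx => ?_, ?_⟩, hG⟩
    · rw [mem_extraVertex] at hx
      refine mem_pairs.2 ⟨Fin.last _, ?_⟩
      unfold paddedSort
      rw [List.getD_eq_default _ _ (by rw [Multiset.length_sort, Fin.val_last]; omega),
        Fin.val_last]
      omega
    · rwa [filter_paddedSort (fun x hx => (hlt u hu x hx).2) (by omega)]
  · rintro ⟨a, ⟨hmono, -, hle, -, hmem⟩, hG⟩
    refine ⟨_, hmem, ?_⟩
    rwa [Fd_eq_pairs_sdiff hdn (fun x hx => (hlt _ hmem x hx).2) (hdeg _ hmem),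
      paddedSort_filter hmono hle]

theorem pairFamily_facetSeqs (hdn : d < n) (hU : IsShiftedOrderIdeal (n - d - 1) U) :
    PairFamily (d / 2) (n - d) 1 (facetSeqs n d U) (extraVertex n d) where
  pos := le_rfl
  mono _ ha := ha.1
  lower _ ha := ha.2.1
  upper _ ha := ha.2.2.1
  up a ha b hb hab hbM := by
    refine ⟨hb, fun i => (ha.2.1 i).trans (hab i), hbM, fun x hx => ?_, ?_⟩
    · have hxa := ha.2.2.2.1 hx
      rw [mem_extraVertex] at hx
      obtain ⟨i, hi⟩ := mem_pairs.1 hxa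
      have h1 := ha.2.2.1 i
      have h2 := hbM i
      have h3 : a i ≤ b i := hab i
      have h4 := i.isLt
      exact mem_pairs.2 ⟨i, by omega⟩
    · have := hU.add_filter_mem (M := n - d) (by omega) (s := Finset.univ.val.map a)
        (t := Finset.univ.val.map b)
        (Multiset.rel_map.2 (Multiset.rel_refl_of_refl_on fun i _ => hab i)) 0
      rw [zero_add, zero_add] at this
      exact this ha.2.2.2.2
  nonempty := by
    refine ⟨fun _ => n - d, monotone_const, fun _ => Nat.sub_pos_of_lt hdn, fun _ => le_rfl,
      fun x hx => ?_, ?_⟩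
    · rw [mem_extraVertex] at hx
      refine mem_pairs.2 ⟨Fin.last _, ?_⟩
      rw [Fin.val_last]
      omega
    · rw [Multiset.filter_eq_nil.2 fun x hx => ?_]
      · exact hU.2.1
      · obtain ⟨_, -, rfl⟩ := Multiset.mem_map.1 hx
        exact lt_irrefl _
  subset_last x hx := by
    rw [mem_extraVertex] at hx
    rw [Finset.mem_singleton]
    omega
  subset_pairs _ ha := ha.2.2.2.1

theorem squeezedSphere_eq_pairSphere (hdn : d < n) (hU : IsShiftedOrderIdeal (n - d - 1) U)
    (hdeg : ∀ u ∈ U, 2 * Multiset.card u ≤ d + 1) :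
    squeezedSphere n d U = pairSphere (facetSeqs n d U) (extraVertex n d) := by
  have hball {G : Finset ℕ} := mem_squeezedBall hdn hU hdeg (G := G)
  have hfacet : ∀ H, H ∈ squeezedBall n d U → H.card = d + 1 →
      ∃ a ∈ facetSeqs n d U, H = pairs a \ extraVertex n d := by
    intro H hH hcard
    obtain ⟨a, ha, hsub⟩ := hball.1 hH
    exact ⟨a, ha, Finset.eq_of_subset_of_card_le hsub (by rw [card_pairs_sdiff hdn ha, hcard])⟩
  have hunion : ∀ a ∈ facetSeqs n d U, ∀ {G}, G ⊆ pairs a \ extraVertex n d →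
      G ∪ extraVertex n d ⊆ pairs a := fun a ha G hG =>
    Finset.union_subset (hG.trans Finset.sdiff_subset) ha.2.2.2.1
  ext F
  constructor
  · rintro ⟨G, hFG, -, hGcard, hone⟩
    obtain ⟨H, hH⟩ := Set.ncard_eq_one.1 hone
    obtain ⟨hHB, hHcard, hGH⟩ : H ∈ {H | H ∈ squeezedBall n d U ∧ H.card = d + 1 ∧ G ⊆ H} :=
      hH ▸ Set.mem_singleton H
    obtain ⟨a, ha, rfl⟩ := hfacet H hHB hHcard
    obtain ⟨x, hx, hxG⟩ := Finset.exists_mem_notMem_of_card_lt_card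
      (show G.card < (pairs a \ extraVertex n d).card by omega)
    rw [Finset.mem_sdiff] at hx
    obtain ⟨b, hb, hne, hcover⟩ := exists_ne_pairs ha.1 ha.2.1 hx.1
    have hGb : G ∪ extraVertex n d ⊆ pairs b := by
      intro y hy
      refine hcover y (hunion a ha hGH hy) ?_
      rintro rfl
      exact (Finset.mem_union.1 hy).elim hxG hx.2
    have hGT : Disjoint G (extraVertex n d) := (Finset.subset_sdiff.1 hGH).2
    have hFT : F ∪ extraVertex n d ⊆ G ∪ extraVertex n d := Finset.union_subset_union_left hFG
    refine ⟨hGT.mono_left hFG, ⟨a, ha, hFT.trans (hunion a ha hGH)⟩, b, hb, fun hbW => hne ?_,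
      hFT.trans hGb⟩
    have hmem : pairs b \ extraVertex n d ∈
        {H | H ∈ squeezedBall n d U ∧ H.card = d + 1 ∧ G ⊆ H} :=
      ⟨hball.2 ⟨b, hbW, subset_rfl⟩, card_pairs_sdiff hdn hbW,
        Finset.subset_sdiff.2 ⟨Finset.subset_union_left.trans hGb, hGT⟩⟩
    rw [hH, Set.mem_singleton_iff] at hmem
    refine eq_of_pairs_subset hb ha.1 ?_
    rw [← Finset.sdiff_union_of_subset hbW.2.2.2.1, hmem]
    exact hunion a ha subset_rfl
  · intro hF
    obtain ⟨H, hFH, hHT, hcard, w, hw, huniq, hHw, -⟩ :=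
      (pairFamily_facetSeqs hdn hU).exists_ridge_of_mem hF
    have hHsub : H ⊆ pairs w \ extraVertex n d :=
      Finset.subset_sdiff.2 ⟨Finset.subset_union_left.trans hHw, hHT⟩
    refine ⟨H, hFH, hball.2 ⟨w, hw, hHsub⟩, ?_,
      Set.ncard_eq_one.2 ⟨pairs w \ extraVertex n d, Set.eq_singleton_iff_unique_mem.2
        ⟨⟨hball.2 ⟨w, hw, subset_rfl⟩, card_pairs_sdiff hdn hw, hHsub⟩, ?_⟩⟩⟩
    · rw [extraVertex, Nat.card_Ioc] at hcard
      omega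
    · rintro K ⟨hK, hKcard, hHK⟩
      obtain ⟨c, hc, rfl⟩ := hfacet K hK hKcard
      rw [(huniq c hc.1 (hunion c hc hHK)).1 hc]

end

/-- Proposition 5.4. Squeezed spheres are strongly edge decomposable. -/
theorem stmt16 (n d : ℕ) (hd : 0 < d) (hdn : d < n) (U : Set (Multiset ℕ))
    (hU : IsShiftedOrderIdeal (n - d - 1) U)
    (hdeg : ∀ u ∈ U, 2 * Multiset.card u ≤ d + 1) :
    StronglyEdgeDecomposable (squeezedSphere n d U) := by
  rw [squeezedSphere_eq_pairSphere hdn hU hdeg]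
  exact (pairFamily_facetSeqs hdn hU).stronglyEdgeDecomposable
end
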